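/- arXiv:2507.19293 — 4 statements merged into one kernel-verified Lean document; each statement's English description precedes it below -/
import Mathlib

section
/- For every n ≥ 2 and every m with 2 ≤ m ≤ n, there exists a 2(m−2)!-rainbow cycle for S_n under all transpositions, i.e., a cyclically ordered list of pairwise distinct permutations of [n] in which any two cyclically consecutive permutations differ by applying a transposition and each of the n(n−1)/2 transpositions on [n] is applied exactly 2(m−2)! times around the cycle. In particular, taking m = n, S_n admits a balanced cyclic Gray code under all transpositions. -/
/-!
A closed walk is recorded by the multiset of its edges, each labelled by the transposition it
applies.

For `m = n` a balanced cyclic Gray code is built by induction on `n`. The permutations with a fixed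
value `b` at a fixed position `x` form a layer, and every layer carries a Gray code for `n - 1`
elements. Layers are joined by exchanging edges. The layers of `p` and `q` can be joined to the
layer of `a` along a hexagon whose opposite edges carry the same label, one of `(a p)`, `(a q)`,
`(p q)`, and are deleted and inserted respectively, so that all labels keep their number of
occurrences. This settles odd `n`. For even `n ≥ 6`, six layers are joined first, by five squares
with labels `t, (a b), t, (a b)`, which exchange two `t` for two `(a b)`; the choice of the `t`
makes the exchanges cancel.

For `m < n` a `2k`-rainbow cycle is extended from `β` to `Option β`. Replacing an edge with label
`(a b)` by a detour through permutations that move `none` preserves the number of occurrences of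
`(a b)` and adds the labels `(none a)` and `(none b)`. For a permutation `c` of `β` without fixed
points and 2-cycles, making `k` detours for each transposition `(i c(i))` adds every label
`(none i)` exactly `2k` times. Two detours can only collide at a vertex between two consecutive
edges, which is avoided by choosing their orientations one after the other.
-/

open Equiv

namespace RainbowCycle

section Walk

variable {V W : Type*}

/-- `IsWalk a b M`: the multiset `M` of directed edges can be traversed as a walk from `a` to
`b`. Forgetting the order of the edges makes cutting, rotating and splicing walks a matter of
adding multisets. -/
inductive IsWalk : V → V → Multiset (V × V) → Prop
  | nil (v : V) : IsWalk v v 0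
  | cons (u : V) {v w : V} {M : Multiset (V × V)} (h : IsWalk v w M) : IsWalk u w ((u, v) ::ₘ M)

theorem IsWalk.trans {a b c : V} {M N : Multiset (V × V)} (h : IsWalk a b M)
    (h' : IsWalk b c N) : IsWalk a c (M + N) := by
  induction h with
  | nil v => simpa using h'
  | cons u _ ih => simpa using (ih h').cons u

theorem IsWalk.map (f : V → W) {a b : V} {M : Multiset (V × V)} (h : IsWalk a b M) :
    IsWalk (f a) (f b) (M.map (Prod.map f f)) := by
  induction h with
  | nil v => exact .nil (f v)
  | cons u _ ih => simpa using ih.cons (f u)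

theorem IsWalk.start_mem {a b : V} {M : Multiset (V × V)} (h : IsWalk a b M) :
    a ∈ b ::ₘ M.map Prod.fst := by
  cases h <;> simp

theorem IsWalk.exists_split {a b c d : V} {M : Multiset (V × V)} (h : IsWalk a b M)
    (hM : (c, d) ∈ M) :
    ∃ M₁ M₂, IsWalk a c M₁ ∧ IsWalk d b M₂ ∧ M = (c, d) ::ₘ (M₁ + M₂) := by
  induction h with
  | nil v => simp at hM
  | @cons u v w M h ih =>
    rcases Multiset.mem_cons.1 hM with hM | hM
    · obtain ⟨rfl, rfl⟩ := Prod.mk.inj hM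
      exact ⟨0, M, .nil _, h, by simp⟩
    · obtain ⟨M₁, M₂, h₁, h₂, rfl⟩ := ih hM
      exact ⟨_, M₂, h₁.cons u, h₂, by rw [Multiset.cons_add, Multiset.cons_swap]⟩

theorem IsWalk.exists_fin {a b : V} {M : Multiset (V × V)} (h : IsWalk a b M) :
    ∃ (k : ℕ) (f : Fin (k + 1) → V), f 0 = a ∧ f (Fin.last k) = b ∧
      M = Finset.univ.val.map fun i : Fin k => (f i.castSucc, f i.succ) := by
  induction h with
  | nil v => exact ⟨0, fun _ => v, rfl, rfl, by simp⟩
  | cons u _ ih =>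
    obtain ⟨k, f, rfl, rfl, rfl⟩ := ih
    refine ⟨k + 1, Fin.cons u f, rfl, by rw [← Fin.succ_last, Fin.cons_succ], ?_⟩
    simp [Fin.univ_succ, Function.comp_def]

/-- `IsTour S M`: the multiset `M` of directed edges can be traversed as a closed walk, which
visits the vertices `S` (with multiplicity; each visit is recorded by the edge leaving it). -/
def IsTour (S : Multiset V) (M : Multiset (V × V)) : Prop :=
  (∃ v, IsWalk v v M) ∧ M.map Prod.fst = S

theorem IsWalk.isTour {a b : V} {M : Multiset (V × V)} (h : IsWalk b a M) :
    IsTour (a ::ₘ M.map Prod.fst) ((a, b) ::ₘ M) :=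
  ⟨⟨a, h.cons a⟩, by simp⟩

theorem IsTour.isWalk {S : Multiset V} {a b : V} {M : Multiset (V × V)}
    (h : IsTour S ((a, b) ::ₘ M)) : IsWalk b a M := by
  obtain ⟨⟨v, h⟩, -⟩ := h
  obtain ⟨M₁, M₂, h₁, h₂, hM⟩ := h.exists_split (Multiset.mem_cons_self _ _)
  rw [(Multiset.cons_inj_right _).1 hM, add_comm]
  exact h₂.trans h₁

theorem IsTour.map (f : V → W) {S : Multiset V} {M : Multiset (V × V)} (h : IsTour S M) :
    IsTour (S.map f) (M.map (Prod.map f f)) := by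
  obtain ⟨⟨v, h⟩, rfl⟩ := h
  exact ⟨⟨f v, h.map f⟩, by simp⟩

theorem IsTour.splice {S T : Multiset V} {a b c d : V} {M N : Multiset (V × V)}
    (h : IsTour S ((a, b) ::ₘ M)) (h' : IsTour T ((c, d) ::ₘ N)) :
    IsTour (S + T) ((a, d) ::ₘ (c, b) ::ₘ (M + N)) := by
  refine ⟨⟨a, ?_⟩, ?_⟩
  · have hcycle := (h'.isWalk.trans (h.isWalk.cons c)).cons a
    rwa [Multiset.add_cons, add_comm] at hcycle
  · rw [← h.2, ← h'.2]
    simp [Multiset.add_cons, Multiset.cons_swap]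

theorem IsTour.exists_fin {S : Multiset V} {M : Multiset (V × V)} (h : IsTour S M) (hM : M ≠ 0) :
    ∃ (k : ℕ) (f : Fin (k + 1) → V), S = Finset.univ.val.map f ∧
      M = Finset.univ.val.map fun i => (f i, f (i + 1)) := by
  obtain ⟨⟨a, b⟩, hab⟩ := Multiset.exists_mem_of_ne_zero hM
  obtain ⟨M, rfl⟩ := Multiset.exists_cons_of_mem hab
  obtain ⟨k, f, rfl, rfl, rfl⟩ := h.isWalk.exists_fin
  have hM' : (f (Fin.last k), f 0) ::ₘ (Finset.univ.val.map fun i : Fin k =>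
      (f i.castSucc, f i.succ)) = Finset.univ.val.map fun i => (f i, f (i + 1)) := by
    simp [Fin.univ_castSuccEmb, Function.comp_def]
  refine ⟨k, f, ?_, hM'⟩
  rw [← h.2, hM', Multiset.map_map]
  rfl

end Walk

section Label

variable {G H : Type*} [Group G] [Group H]

/-- The label of the edge from `g` to `h` in the Cayley graph of `G` for left multiplication:
the element that has to be applied to `g` in order to obtain `h`. -/
def label (e : G × G) : G := e.2 * e.1⁻¹

theorem label_eq_iff {g h t : G} : label (g, h) = t ↔ h = t * g :=
  mul_inv_eq_iff_eq_mul

@[simp]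
theorem label_mul_left (g t : G) : label (g, t * g) = t := label_eq_iff.2 rfl

theorem exists_mem_of_mem_map_label {t : G} {M : Multiset (G × G)} (ht : t ∈ M.map label) :
    ∃ g, (g, t * g) ∈ M := by
  obtain ⟨⟨g, h⟩, hM, rfl⟩ := Multiset.mem_map.1 ht
  exact ⟨g, by simpa [label] using hM⟩

theorem map_label_map_mul_right (k : G) (M : Multiset (G × G)) :
    (M.map (Prod.map (· * k) (· * k))).map label = M.map label := by
  rw [Multiset.map_map]
  exact Multiset.map_congr rfl fun e _ => by simp [label, mul_assoc]

theorem map_label_map_hom (φ : G →* H) (M : Multiset (G × G)) :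
    (M.map (Prod.map φ φ)).map label = (M.map label).map φ := by
  simp only [Multiset.map_map]
  exact Multiset.map_congr rfl fun e _ => by simp [label]

/-- The edges of the walk that starts at `g` and applies the letters of a word one by one. -/
def wordEdges : G → List G → List (G × G)
  | _, [] => []
  | g, t :: w => (g, t * g) :: wordEdges (t * g) w

theorem isWalk_wordEdges (g : G) (w : List G) :
    IsWalk g (w.reverse.prod * g) (wordEdges g w : Multiset (G × G)) := by
  induction w generalizing g with
  | nil => simpa [wordEdges] using IsWalk.nil g
  | cons t w ih => simpa [wordEdges, mul_assoc] using (ih (t * g)).cons g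

theorem map_label_wordEdges (g : G) (w : List G) : (wordEdges g w).map label = w := by
  induction w generalizing g with
  | nil => rfl
  | cons t w ih => simp [wordEdges, ih]

end Label

section Transposition

theorem ofSubtype_apply_self {α : Type*} [DecidableEq α] {b : α} (σ : Perm {i // i ≠ b}) :
    Perm.ofSubtype σ b = b :=
  Perm.ofSubtype_apply_of_not_mem _ (by simp)

theorem exists_ofSubtype_eq {α : Type*} [DecidableEq α] {b : α} {g : Perm α} (hg : g b = b) :
    ∃ σ : Perm {i // i ≠ b}, Perm.ofSubtype σ = g :=
  ⟨_, Perm.ofSubtype_subtypePerm (fun _ => g.injective.ne_iff' hg)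
    (fun i => by rintro hi rfl; exact hi hg)⟩

theorem swap_ne_swap {α : Type*} [DecidableEq α] {a b p q : α} (hpq : p ≠ q) (hpa : p ≠ a)
    (hpb : p ≠ b) : swap p q ≠ swap a b := fun h =>
  hpq <| by simpa [swap_apply_of_ne_of_ne hpa hpb] using (congr($h p)).symm

variable (α : Type*) [Fintype α] [DecidableEq α]

/-- The set of all transpositions on `α`, described by their supports so that membership is
decidable. -/
def transpositions : Finset (Perm α) := {t | t.support.card = 2}

variable {α}

/-- The set of all transpositions on `α` that fix `b`. -/
def transpositionsFixing (b : α) : Finset (Perm α) := {t ∈ transpositions α | t b = b}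

theorem mem_transpositions {t : Perm α} : t ∈ transpositions α ↔ t.IsSwap := by
  simp [transpositions, Perm.card_support_eq_two]

theorem swap_mem_transpositions {a b : α} (hab : a ≠ b) : swap a b ∈ transpositions α :=
  mem_transpositions.2 ⟨a, b, hab, rfl⟩

theorem mem_transpositionsFixing {b : α} {t : Perm α} :
    t ∈ transpositionsFixing b ↔ t ∈ transpositions α ∧ t b = b := by
  simp [transpositionsFixing]

theorem swap_mem_transpositionsFixing {a b c : α} (hab : a ≠ b) (hca : c ≠ a) (hcb : c ≠ b) :
    swap a b ∈ transpositionsFixing c :=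
  mem_transpositionsFixing.2 ⟨swap_mem_transpositions hab, swap_apply_of_ne_of_ne hca hcb⟩

theorem mul_self_of_mem_transpositions {t : Perm α} (ht : t ∈ transpositions α) : t * t = 1 := by
  obtain ⟨a, b, -, rfl⟩ := mem_transpositions.1 ht
  exact swap_mul_self a b

theorem map_permCongrHom_transpositions {β : Type*} [Fintype β] [DecidableEq β] (e : α ≃ β) :
    (transpositions α).val.map e.permCongrHom = (transpositions β).val := by
  refine (Multiset.Nodup.ext ((transpositions α).nodup.map e.permCongrHom.injective)
    (transpositions β).nodup).2 fun t => ?_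
  simp only [Multiset.mem_map, Finset.mem_val, mem_transpositions]
  constructor
  · rintro ⟨_, ⟨a, b, hab, rfl⟩, rfl⟩
    exact ⟨e a, e b, e.injective.ne hab, symm_trans_swap_trans _ _ _⟩
  · rintro ⟨a, b, hab, rfl⟩
    exact ⟨_, ⟨e.symm a, e.symm b, e.symm.injective.ne hab, rfl⟩,
      by simp [permCongrHom, permCongr_def, symm_trans_swap_trans]⟩

theorem map_ofSubtype_transpositions (b : α) :
    (transpositions {i // i ≠ b}).val.map Perm.ofSubtype = (transpositionsFixing b).val := by
  refine (Multiset.Nodup.ext ((transpositions _).nodup.map Perm.ofSubtype_injective)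
    (transpositionsFixing b).nodup).2 fun t => ?_
  simp only [Multiset.mem_map, Finset.mem_val, mem_transpositionsFixing, mem_transpositions]
  constructor
  · rintro ⟨σ, hσ, rfl⟩
    exact ⟨hσ.of_subtype_isSwap, ofSubtype_apply_self σ⟩
  · rintro ⟨⟨p, q, hpq, rfl⟩, hb⟩
    obtain ⟨hp, hq⟩ : b ≠ p ∧ b ≠ q := by
      refine ⟨?_, ?_⟩ <;> rintro rfl <;> simp_all
    exact ⟨swap ⟨p, hp.symm⟩ ⟨q, hq.symm⟩, ⟨_, _, by simpa using hpq, rfl⟩,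
      Perm.ofSubtype_swap_eq _ _⟩

theorem sum_nsmul_transpositionsFixing (r : ℕ) :
    ∑ b : α, r • (transpositionsFixing b).val =
      ((Fintype.card α - 2) * r) • (transpositions α).val := by
  have hfix : ∀ t ∈ transpositions α,
      (Finset.univ.filter fun b => t b = b).card = Fintype.card α - 2 := by
    intro t ht
    rw [← Perm.card_support_eq_two.2 (mem_transpositions.1 ht), ← Finset.card_compl]
    congr 1
    ext b
    simp
  ext t
  by_cases ht : t ∈ transpositions α
  · simp [Multiset.count_sum', Multiset.count_nsmul, Multiset.count_eq_of_nodup,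
      Finset.nodup, mem_transpositionsFixing, ht, hfix t ht, Finset.sum_ite]
  · simp [Multiset.count_eq_zero_of_notMem, mem_transpositionsFixing, ht]

end Transposition

section GrayCode

variable (α : Type*) [Fintype α] [DecidableEq α]

/-- There is an `r`-rainbow cycle for the permutations of `α` under all transpositions. -/
def HasRainbowCycle (r : ℕ) : Prop :=
  ∃ S M, IsTour S M ∧ S.Nodup ∧ M.map label = r • (transpositions α).val

/-- There is an `r`-rainbow cycle that visits every permutation of `α`, that is, a balanced
cyclic Gray code. -/
def HasGrayCode (r : ℕ) : Prop :=
  ∃ M, IsTour (Finset.univ : Finset (Perm α)).val M ∧ M.map label = r • (transpositions α).val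

variable {α}

theorem HasGrayCode.hasRainbowCycle {r : ℕ} (h : HasGrayCode α r) : HasRainbowCycle α r := by
  obtain ⟨M, hM, hlabel⟩ := h
  exact ⟨_, M, hM, Finset.nodup _, hlabel⟩

variable {β : Type*} [Fintype β] [DecidableEq β]

theorem HasRainbowCycle.congr (e : α ≃ β) {r : ℕ} (h : HasRainbowCycle α r) :
    HasRainbowCycle β r := by
  obtain ⟨S, M, hM, hS, hlabel⟩ := h
  refine ⟨_, _, hM.map e.permCongrHom, hS.map e.permCongrHom.injective, ?_⟩
  rw [← map_permCongrHom_transpositions e, ← Multiset.map_nsmul, ← hlabel]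
  exact map_label_map_hom e.permCongrHom.toMonoidHom M

theorem HasGrayCode.congr (e : α ≃ β) {r : ℕ} (h : HasGrayCode α r) : HasGrayCode β r := by
  obtain ⟨M, hM, hlabel⟩ := h
  refine ⟨M.map (Prod.map e.permCongrHom e.permCongrHom), ?_, ?_⟩
  · rw [← Multiset.map_univ_val_equiv e.permCongrHom.toEquiv]
    exact hM.map e.permCongrHom
  · rw [← map_permCongrHom_transpositions e, ← Multiset.map_nsmul, ← hlabel]
    exact map_label_map_hom e.permCongrHom.toMonoidHom M

theorem HasGrayCode.of_word {r : ℕ} (w : List (Perm α)) (hclosed : w.reverse.prod = 1)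
    (hvisits : ((wordEdges 1 w).map Prod.fst : Multiset (Perm α)) = Finset.univ.val)
    (hbalanced : (w : Multiset (Perm α)) = r • (transpositions α).val) : HasGrayCode α r := by
  refine ⟨wordEdges 1 w, ⟨⟨1, ?_⟩, hvisits⟩, ?_⟩
  · simpa [hclosed] using isWalk_wordEdges 1 w
  · simpa [map_label_wordEdges] using hbalanced

theorem hasGrayCode_fin_two : HasGrayCode (Fin 2) 2 :=
  .of_word [swap 0 1, swap 0 1] (by decide +kernel) (by decide +kernel) (by decide +kernel)

theorem hasGrayCode_fin_four : HasGrayCode (Fin 4) 4 :=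
  .of_word [swap 0 1, swap 0 2, swap 0 1, swap 0 2, swap 0 1, swap 0 3, swap 0 1, swap 0 3,
      swap 1 2, swap 1 3, swap 1 2, swap 0 3, swap 2 3, swap 0 3, swap 1 2, swap 1 3, swap 0 2,
      swap 2 3, swap 1 3, swap 1 2, swap 2 3, swap 0 2, swap 1 3, swap 2 3]
    (by decide +kernel) (by decide +kernel) (by decide +kernel)

end GrayCode

section Layers

variable {α : Type*} {x a b : α} {M N : Multiset (Perm α × Perm α)} {t t' : Perm α}

/-- Some edge of `M` has the label `t` and starts at a permutation with the value `a` at the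
position `x`. Such an edge can be exchanged when a further layer is joined. -/
def HasStep (x : α) (M : Multiset (Perm α × Perm α)) (a : α) (t : Perm α) : Prop :=
  ∃ g : Perm α, g x = a ∧ (g, t * g) ∈ M

theorem HasStep.mono (h : HasStep x M a t) (hMN : M ⊆ N) : HasStep x N a t :=
  let ⟨g, hg, hM⟩ := h
  ⟨g, hg, hMN hM⟩

theorem HasStep.of_cons {g : Perm α} (htt' : t' ≠ t) (h : HasStep x ((g, t * g) ::ₘ M) a t') :
    HasStep x M a t' := by
  obtain ⟨h, hx, hM⟩ := h
  refine ⟨h, hx, (Multiset.mem_cons.1 hM).resolve_left fun hgh => htt' ?_⟩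
  obtain ⟨rfl, hth⟩ := Prod.mk.inj hgh
  exact mul_right_cancel hth

variable [Fintype α] [DecidableEq α] {r : ℕ} {B B' : Finset α} {D D' E E' : Multiset (Perm α)}

/-- The permutations of `α` that have the value `b` at the position `x`. -/
def layer (x b : α) : Finset (Perm α) := {g | g x = b}

theorem sum_layer (x : α) : ∑ b, (layer x b).val = (Finset.univ : Finset (Perm α)).val := by
  ext g
  simp [Multiset.count_sum', layer, Multiset.count_filter]

/-- `M` is a tour through the layers of position `x` with values in `B`, whose labels are those
of separate `r`-fold balanced tours through the layers, except that the labels `D` have been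
deleted and the labels `E` inserted. The two may have labels in common. -/
structure MergesLayers (x : α) (r : ℕ) (B : Finset α) (D E : Multiset (Perm α))
    (M : Multiset (Perm α × Perm α)) : Prop where
  isTour : IsTour (∑ b ∈ B, (layer x b).val) M
  labels : M.map label + D = ∑ b ∈ B, r • (transpositionsFixing b).val + E

theorem MergesLayers.rebalance (h : MergesLayers x r B D E M) (hDE : D + E' = D' + E) :
    MergesLayers x r B D' E' M := by
  refine ⟨h.isTour, add_right_cancel (b := E) ?_⟩
  rw [add_assoc, ← hDE, ← add_assoc, h.labels, add_right_comm]

theorem MergesLayers.splice {g g' k k' : Perm α} (hB : Disjoint B B')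
    (h : MergesLayers x r B D E ((g, g') ::ₘ M)) (h' : MergesLayers x r B' D' E' ((k, k') ::ₘ N)) :
    MergesLayers x r (B ∪ B') ({label (g, g'), label (k, k')} + (D + D'))
      ({label (g, k'), label (k, g')} + (E + E')) ((g, k') ::ₘ (k, g') ::ₘ (M + N)) := by
  refine ⟨?_, ?_⟩
  · rw [Finset.sum_union hB]
    exact h.isTour.splice h'.isTour
  · have hlabels := congr({label (g, k')} + {label (k, g')} + ($(h.labels) + $(h'.labels)))
    rw [Finset.sum_union hB]
    simp only [Multiset.map_add, Multiset.map_singleton, ← Multiset.singleton_add,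
      Multiset.insert_eq_cons] at hlabels ⊢
    convert hlabels using 1 <;> abel

theorem MergesLayers.hasStep (hr : r ≠ 0) (h : MergesLayers x r {b} 0 0 M)
    (ht : t ∈ transpositionsFixing b) : HasStep x M b t := by
  have hlabels := h.labels
  simp only [Finset.sum_singleton, add_zero] at hlabels
  obtain ⟨g, hg⟩ : ∃ g, (g, t * g) ∈ M :=
    exists_mem_of_mem_map_label <| by simpa [hlabels, Multiset.mem_nsmul, hr] using ht
  have hgx : g ∈ M.map Prod.fst := Multiset.mem_map_of_mem _ hg
  rw [h.isTour.2] at hgx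
  exact ⟨g, by simpa [layer] using hgx, hg⟩

theorem map_ofSubtype_mul {g : Perm α} (hg : g x = b) :
    (Finset.univ.val.map fun σ : Perm {i // i ≠ b} => Perm.ofSubtype σ * g) =
      (layer x b).val := by
  have hinj : Function.Injective fun σ : Perm {i // i ≠ b} => Perm.ofSubtype σ * g :=
    (mul_left_injective g).comp Perm.ofSubtype_injective
  refine (Multiset.Nodup.ext (Finset.univ.nodup.map hinj) (layer x b).nodup).2 fun h => ?_
  simp only [Multiset.mem_map, Finset.mem_val, Finset.mem_univ, true_and, layer,
    Finset.mem_filter]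
  constructor
  · rintro ⟨σ, rfl⟩
    rw [Perm.mul_apply, hg, ofSubtype_apply_self]
  · intro hh
    obtain ⟨σ, hσ⟩ := exists_ofSubtype_eq (b := b) (g := h * g⁻¹) (by simp [← hg, hh.trans hg.symm])
    exact ⟨σ, by simp [hσ]⟩

theorem mergesLayers_singleton {M : Multiset (Perm {i // i ≠ b} × Perm {i // i ≠ b})} {k : Perm α}
    (hM : IsTour Finset.univ.val M) (hlabels : M.map label = r • (transpositions _).val)
    (hk : k x = b) :
    MergesLayers x r {b} 0 0
      ((M.map (Prod.map Perm.ofSubtype Perm.ofSubtype)).map (Prod.map (· * k) (· * k))) := by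
  refine ⟨?_, ?_⟩
  · rw [Finset.sum_singleton, ← map_ofSubtype_mul hk]
    simpa only [Multiset.map_map, Function.comp_def] using (hM.map Perm.ofSubtype).map (· * k)
  · rw [map_label_map_mul_right, map_label_map_hom, hlabels, Multiset.map_nsmul,
      map_ofSubtype_transpositions, Finset.sum_singleton]

theorem HasGrayCode.exists_mergesLayers (h : HasGrayCode {i // i ≠ b} r) (x : α) :
    ∃ M, MergesLayers x r {b} 0 0 M :=
  let ⟨_, hM, hlabels⟩ := h
  ⟨_, mergesLayers_singleton hM hlabels (swap_apply_left x b)⟩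

/-- Right translation preserves labels, so it can move an edge with label `t` to the prescribed
place. -/
theorem exists_layer_tour {g : Perm α} (hr : r ≠ 0) (h : HasGrayCode {i // i ≠ b} r) (hg : g x = b)
    (ht : t ∈ transpositionsFixing b) : ∃ M, MergesLayers x r {b} 0 0 ((g, t * g) ::ₘ M) := by
  obtain ⟨M, hM, hlabels⟩ := h
  obtain ⟨τ, hτ, rfl⟩ : ∃ τ ∈ transpositions {i // i ≠ b}, Perm.ofSubtype τ = t := by
    simpa [← Finset.mem_val, ← map_ofSubtype_transpositions] using ht
  obtain ⟨u, hu⟩ : ∃ u, (u, τ * u) ∈ M :=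
    exists_mem_of_mem_map_label <| by simpa [hlabels, Multiset.mem_nsmul, hr] using hτ
  have htour := mergesLayers_singleton (k := (Perm.ofSubtype u)⁻¹ * g) hM hlabels <| by
    rw [Perm.mul_apply, hg, Perm.inv_eq_iff_eq, ofSubtype_apply_self]
  have hedge := Multiset.mem_map_of_mem (Prod.map (· * ((Perm.ofSubtype u)⁻¹ * g))
    (· * ((Perm.ofSubtype u)⁻¹ * g))) (Multiset.mem_map_of_mem
      (Prod.map Perm.ofSubtype Perm.ofSubtype) hu)
  obtain ⟨N, hN⟩ := Multiset.exists_cons_of_mem hedge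
  exact ⟨N, by simpa [hN, mul_assoc] using htour⟩

theorem MergesLayers.exists_splice_layer {g g' k : Perm α} (hr : r ≠ 0)
    (hb : HasGrayCode {i // i ≠ b} r) (hbB : b ∉ B) (h : MergesLayers x r B D E ((g, g') ::ₘ M))
    (hk : k x = b) (ht : t ∈ transpositionsFixing b) :
    ∃ N, MergesLayers x r {b} 0 0 ((k, t * k) ::ₘ N) ∧
      MergesLayers x r (insert b B) ({label (g, g'), t} + D)
        ({label (g, t * k), label (k, g')} + E) ((g, t * k) ::ₘ (k, g') ::ₘ (M + N)) := by
  obtain ⟨N, hN⟩ := exists_layer_tour hr hb hk ht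
  have hsplice := h.splice (by simpa using hbB) hN
  rw [label_mul_left, add_zero, add_zero, Finset.union_singleton] at hsplice
  exact ⟨N, hN, hsplice⟩

theorem MergesLayers.exists_square (hr : r ≠ 0) (hb : HasGrayCode {i // i ≠ b} r) (hbB : b ∉ B)
    (hta : t ∈ transpositionsFixing a) (htb : t ∈ transpositionsFixing b)
    (h : MergesLayers x r B D E M) (hM : HasStep x M a t) :
    ∃ M', MergesLayers x r (insert b B) ({t, t} + D) ({swap a b, swap a b} + E) M' ∧
      (∀ c, ∀ t' ≠ t, HasStep x M c t' → HasStep x M' c t') ∧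
      ∀ t' ∈ transpositionsFixing b, t' ≠ t → HasStep x M' b t' := by
  obtain ⟨g, hg, hgM⟩ := hM
  obtain ⟨M, rfl⟩ := Multiset.exists_cons_of_mem hgM
  obtain ⟨htt, hta⟩ := mem_transpositionsFixing.1 hta
  have htb' := (mem_transpositionsFixing.1 htb).2
  have hcomm : swap a b * t = t * swap a b := by rw [mul_swap_eq_swap_mul, hta, htb']
  obtain ⟨N, hN, h'⟩ := h.exists_splice_layer (k := swap a b * (t * g)) hr hb hbB
    (by simp [hg, hta]) htb
  have hk : t * (swap a b * (t * g)) = swap a b * g := by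
    rw [← mul_assoc, ← mul_assoc, ← hcomm, mul_assoc _ t t, mul_self_of_mem_transpositions htt,
      mul_one]
  have hlabel : label (swap a b * (t * g), t * g) = swap a b := label_eq_iff.2 (by simp)
  rw [hk, hlabel, label_mul_left, label_mul_left] at h'
  exact ⟨_, h', fun c t' ht' hc => (hc.of_cons ht').mono fun _ he => by simp [he],
    fun t' ht' htt' => ((hN.hasStep hr ht').of_cons htt').mono fun _ he => by simp [he]⟩

theorem MergesLayers.exists_hexagon {p q : α} (hr : r ≠ 0) (hp : HasGrayCode {i // i ≠ p} r)
    (hq : HasGrayCode {i // i ≠ q} r) (hpB : p ∉ B) (hqB : q ∉ B) (hpq : p ≠ q) (ha : a ∈ B)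
    (h : MergesLayers x r B D E M) (hM : HasStep x M a (swap p q)) :
    ∃ M', MergesLayers x r (insert q (insert p B)) D E M' ∧
      ∀ c, ∀ t ≠ swap p q, HasStep x M c t → HasStep x M' c t := by
  obtain ⟨g, hg, hgM⟩ := hM
  obtain ⟨M, rfl⟩ := Multiset.exists_cons_of_mem hgM
  have hap : a ≠ p := ne_of_mem_of_not_mem ha hpB
  have haq : a ≠ q := ne_of_mem_of_not_mem ha hqB
  obtain ⟨N, -, h₁⟩ := h.exists_splice_layer (k := swap a q * (swap a p * g)) hr hp hpB
    (by simp [hg, swap_apply_of_ne_of_ne hap.symm hpq])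
    (swap_mem_transpositionsFixing haq hap.symm hpq)
  rw [swap_mul_self_mul, Multiset.cons_swap] at h₁
  obtain ⟨N', -, h₂⟩ := h₁.exists_splice_layer (k := swap a p * (swap a q * g)) hr hq
    (by simp [hqB, hpq.symm]) (by simp [hg, swap_apply_of_ne_of_ne haq.symm hpq.symm])
    (swap_mem_transpositionsFixing hap haq.symm hpq.symm)
  rw [swap_mul_self_mul, label_mul_left, label_mul_left] at h₂
  have hconj : swap a q * swap a p = swap p q * swap a q := by
    rw [mul_swap_eq_swap_mul, swap_apply_left, swap_apply_of_ne_of_ne hap.symm hpq, swap_comm q p]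
  have hlabel : label (swap a q * (swap a p * g), swap a q * g) = swap p q :=
    label_eq_iff.2 <| by rw [← mul_assoc (swap a q), hconj, mul_assoc, swap_mul_self_mul]
  have hlabel' : label (swap a p * (swap a q * g), swap p q * g) = swap a q :=
    label_eq_iff.2 <| by rw [← mul_assoc (swap a q), hconj, mul_assoc, swap_mul_self_mul]
  rw [hlabel, hlabel'] at h₂
  refine ⟨_, h₂.rebalance ?_, fun c t ht hc => (hc.of_cons ht).mono fun _ he => by simp [he]⟩
  simp only [← Multiset.singleton_add, Multiset.insert_eq_cons]
  abel

/-- Every transposition of two values outside `B` occurs on an edge of `M` that starts in the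
layer of `a`. These are the edges at which the layers outside `B` can be attached. -/
def HasFreeSteps (x : α) (M : Multiset (Perm α × Perm α)) (a : α) (B : Finset α) : Prop :=
  ∀ p ∉ B, ∀ q ∉ B, p ≠ q → HasStep x M a (swap p q)

theorem MergesLayers.hasGrayCode (hr : r ≠ 0) (hgray : ∀ b : α, HasGrayCode {i // i ≠ b} r)
    (ha : a ∈ B) (hB : Even Bᶜ.card) (h : MergesLayers x r B 0 0 M) (hM : HasFreeSteps x M a B) :
    HasGrayCode α ((Fintype.card α - 2) * r) := by
  induction hn : Bᶜ.card using Nat.strong_induction_on generalizing B M with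
  | _ n ih =>
  obtain hzero | hpos := Nat.eq_zero_or_pos Bᶜ.card
  · obtain rfl : B = Finset.univ := by simpa using hzero
    exact ⟨M, sum_layer x ▸ h.isTour, by
      simpa [sum_nsmul_transpositionsFixing] using h.labels⟩
  obtain ⟨p, hp, q, hq, hpq⟩ := Finset.one_lt_card.1 (by grind : 1 < Bᶜ.card)
  rw [Finset.mem_compl] at hp hq
  obtain ⟨M', h', hstep⟩ := h.exists_hexagon hr (hgray p) (hgray q) hp hq hpq ha (hM p hp q hq hpq)
  have hcard : (insert q (insert p B))ᶜ.card + 2 = Bᶜ.card := by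
    rw [Finset.compl_insert, Finset.compl_insert, Finset.card_erase_of_mem (by simp [hq, hpq.symm]),
      Finset.card_erase_of_mem (by simpa using hp)]
    grind
  refine ih _ (by lia) (by simp [ha]) (by grind) h' (fun p' hp' q' hq' hpq' => ?_) rfl
  simp only [Finset.mem_insert, not_or] at hp' hq'
  exact hstep a _ (swap_ne_swap hpq' hp'.2.1 hp'.1) (hM p' hp'.2.2 q' hq'.2.2 hpq')

/-- Six layers along a path `φ 0, …, φ 5` are joined by squares. Joining `φ i` to `φ (i + 1)`
inserts the label `swap (φ i) (φ (i + 1))` twice, and the deleted labels are chosen such that in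
total each of these five labels is also deleted twice. -/
theorem MergesLayers.exists_merge_six (hr : r ≠ 0) (hgray : ∀ b : α, HasGrayCode {i // i ≠ b} r)
    (φ : Fin 6 ↪ α) (h₀ : MergesLayers x r {φ 0} 0 0 M) :
    ∃ M', MergesLayers x r (Finset.univ.map φ) 0 0 M' ∧
      ∀ c t, (∀ i j, t ≠ swap (φ i) (φ j)) → HasStep x M c t → HasStep x M' c t := by
  have hfix : ∀ {i j k : Fin 6}, i ≠ j ∧ k ≠ i ∧ k ≠ j →
      swap (φ i) (φ j) ∈ transpositionsFixing (φ k) := fun ⟨hij, hki, hkj⟩ =>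
    swap_mem_transpositionsFixing (φ.injective.ne hij) (φ.injective.ne hki) (φ.injective.ne hkj)
  have hne : ∀ {i j k l : Fin 6}, i ≠ j ∧ i ≠ k ∧ i ≠ l → swap (φ i) (φ j) ≠ swap (φ k) (φ l) :=
    fun ⟨hij, hik, hil⟩ =>
      swap_ne_swap (φ.injective.ne hij) (φ.injective.ne hik) (φ.injective.ne hil)
  obtain ⟨M₁, h₁, hold₁, hnew₁⟩ := h₀.exists_square (b := φ 1) (t := swap (φ 2) (φ 3)) hr (hgray _)
    (by simp) (hfix (by decide)) (hfix (by decide)) (h₀.hasStep hr (hfix (by decide)))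
  obtain ⟨M₂, h₂, hold₂, hnew₂⟩ := h₁.exists_square (b := φ 2) (t := swap (φ 4) (φ 3)) hr (hgray _)
    (by simp) (hfix (by decide)) (hfix (by decide)) (hnew₁ _ (hfix (by decide)) (hne (by decide)))
  obtain ⟨M₃, h₃, hold₃, hnew₃⟩ := h₂.exists_square (b := φ 3) (t := swap (φ 5) (φ 4)) hr (hgray _)
    (by simp) (hfix (by decide)) (hfix (by decide)) (hnew₂ _ (hfix (by decide)) (hne (by decide)))
  obtain ⟨M₄, h₄, hold₄, hnew₄⟩ := h₃.exists_square (b := φ 4) (t := swap (φ 1) (φ 2)) hr (hgray _)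
    (by simp) (hfix (by decide)) (hfix (by decide)) (hnew₃ _ (hfix (by decide)) (hne (by decide)))
  obtain ⟨M₅, h₅, hold₅, -⟩ := h₄.exists_square (b := φ 5) (t := swap (φ 0) (φ 1)) hr (hgray _)
    (by simp) (hfix (by decide)) (hfix (by decide)) (hnew₄ _ (hfix (by decide)) (hne (by decide)))
  have hB : insert (φ 5) (insert (φ 4) (insert (φ 3) (insert (φ 2) (insert (φ 1) {φ 0})))) =
      Finset.univ.map φ := by
    ext b
    simp [Fin.exists_fin_succ]
    grind
  rw [hB] at h₅
  refine ⟨M₅, h₅.rebalance ?_, fun c t ht hM => hold₅ _ _ (ht _ _) <| hold₄ _ _ (ht _ _) <|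
    hold₃ _ _ (ht _ _) <| hold₂ _ _ (ht _ _) <| hold₁ _ _ (ht _ _) hM⟩
  rw [swap_comm (φ 4) (φ 3), swap_comm (φ 5) (φ 4)]
  simp only [← Multiset.singleton_add, Multiset.insert_eq_cons]
  abel

theorem HasGrayCode.of_forall_subtype_ne [Nonempty α] (hr : r ≠ 0)
    (hcard : Fintype.card α ≠ 2) (hcard' : Fintype.card α ≠ 4)
    (hgray : ∀ b : α, HasGrayCode {i // i ≠ b} r) : HasGrayCode α ((Fintype.card α - 2) * r) := by
  obtain ⟨a⟩ := ‹Nonempty α›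
  obtain heven | hodd := Nat.even_or_odd (Fintype.card α)
  · have hsix : 6 ≤ Fintype.card α := by
      have : 0 < Fintype.card α := Fintype.card_pos_iff.2 ⟨a⟩
      grind
    obtain ⟨φ⟩ : Nonempty (Fin 6 ↪ α) := Function.Embedding.nonempty_of_card_le (by simpa)
    obtain ⟨M, hM⟩ := (hgray (φ 0)).exists_mergesLayers a
    obtain ⟨M', hM', hstep⟩ := hM.exists_merge_six hr hgray φ
    refine hM'.hasGrayCode (a := φ 0) hr hgray (by simp) ?_ fun p hp q hq hpq => ?_
    · rw [Finset.card_compl, Finset.card_map, Finset.card_univ, Fintype.card_fin]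
      grind
    · have hpφ : ∀ i, p ≠ φ i := by simpa [eq_comm] using hp
      have hqφ : ∀ i, q ≠ φ i := by simpa [eq_comm] using hq
      exact hstep _ _ (fun i j => swap_ne_swap hpq (hpφ i) (hpφ j))
        (hM.hasStep hr (swap_mem_transpositionsFixing hpq (hpφ 0).symm (hqφ 0).symm))
  · obtain ⟨M, hM⟩ := (hgray a).exists_mergesLayers a
    refine hM.hasGrayCode hr hgray (Finset.mem_singleton_self a) ?_ fun p hp q hq hpq =>
      hM.hasStep hr (swap_mem_transpositionsFixing hpq (by grind) (by grind))
    rw [Finset.card_compl, Finset.card_singleton]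
    grind

theorem hasGrayCode_fin (n : ℕ) : HasGrayCode (Fin (n + 2)) (2 * n.factorial) := by
  induction n with
  | zero => exact hasGrayCode_fin_two
  | succ n ih =>
    obtain rfl | hn := eq_or_ne n 1
    · exact hasGrayCode_fin_four
    · have h := HasGrayCode.of_forall_subtype_ne (α := Fin (n + 3)) (by positivity) (by simp)
        (by simpa) fun b => ih.congr (finSuccAboveEquiv b)
      convert h using 1
      simp [Nat.factorial_succ]
      ring

end Layers

section Extension

variable {β : Type*}

theorem optionCongr_mul (s t : Perm β) :
    optionCongr (s * t) = optionCongr s * optionCongr t :=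
  optionCongr_trans t s

variable [DecidableEq β]

/-- The label of an edge between permutations of `Option β`, which are encoded as in
`Equiv.Perm.decomposeOption`: `(o, g)` stands for `swap none o * optionCongr g`. -/
def optionLabel (e : (Option β × Perm β) × (Option β × Perm β)) : Perm (Option β) :=
  label (e.map Perm.decomposeOption.symm Perm.decomposeOption.symm)

theorem optionLabel_none_none (t g : Perm β) :
    optionLabel ((none, g), (none, t * g)) = optionCongr t := by
  refine label_eq_iff.2 ?_
  simp [Perm.mul_def]

theorem optionLabel_none_some (b : β) (g : Perm β) :
    optionLabel ((none, g), (some b, g)) = swap none (some b) := by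
  refine label_eq_iff.2 ?_
  simp [Perm.one_def]

theorem optionLabel_some_none (a : β) (g : Perm β) :
    optionLabel ((some a, g), (none, g)) = swap none (some a) := by
  refine label_eq_iff.2 ?_
  simp [Perm.one_def]

theorem optionLabel_some_some (a b : β) (g : Perm β) :
    optionLabel ((some b, g), (some a, swap a b * g)) = optionCongr (swap a b) := by
  refine label_eq_iff.2 ?_
  simp only [Perm.decomposeOption_symm_apply, optionCongr_mul, optionCongr_swap, ← mul_assoc]
  rw [mul_swap_eq_swap_mul (swap (some a) (some b)), swap_apply_right,
    swap_apply_of_ne_of_ne (by simp) (by simp)]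

variable [Fintype β]

/-- The transpositions that a detour through `none` adds to an edge with label `t`. -/
def detourLabels (t : Perm β) : Multiset (Perm (Option β)) :=
  t.support.val.map fun i => swap none (some i)

/-- `M'` is obtained from the walk `M` from `u` to `w` by regarding permutations of `β` as
permutations of `Option β` that fix `none` and by replacing some of its edges, whose labels are
`L`, by detours of length three. At most one detour visits a permutation `(some b, u)`, so that a
detour along an edge towards `u` can be prepended without meeting it. -/
structure IsDetour (u w : Perm β) (M : Multiset (Perm β × Perm β)) (L : Multiset (Perm β))
    (M' : Multiset ((Option β × Perm β) × (Option β × Perm β))) : Prop where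
  isWalk : IsWalk (none, u) (none, w) M'
  nodup : ((none, w) ::ₘ M'.map Prod.fst).Nodup
  snd_mem : ∀ v ∈ M'.map Prod.fst, v.2 ∈ w ::ₘ M.map Prod.fst
  subsingleton : {b | (some b, u) ∈ M'.map Prod.fst}.Subsingleton
  labels : M'.map optionLabel = (M.map label).map optionCongr + (L.map detourLabels).sum

variable {u v w : Perm β} {M : Multiset (Perm β × Perm β)} {L : Multiset (Perm β)}
  {M' : Multiset ((Option β × Perm β) × (Option β × Perm β))}

theorem IsDetour.nil (w : Perm β) : IsDetour w w 0 0 0 :=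
  ⟨.nil _, by simp, by simp, by simp, by simp⟩

theorem IsDetour.cons {t : Perm β} (h : IsDetour (t * u) w M L M')
    (hu : u ∉ w ::ₘ M.map Prod.fst) :
    IsDetour u w ((u, t * u) ::ₘ M) L (((none, u), (none, t * u)) ::ₘ M') where
  isWalk := h.isWalk.cons _
  nodup := by
    have := h.nodup
    have := h.snd_mem (none, u)
    simp_all
    grind
  snd_mem := by
    have := h.snd_mem
    simp_all
    grind
  subsingleton := by
    have := fun b => h.snd_mem (some b, u)
    simp_all
  labels := by simp [h.labels, optionLabel_none_none]

theorem IsDetour.cons_detour {a b : β} (hab : a ≠ b) (h : IsDetour (swap a b * u) w M L M')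
    (hu : u ∉ w ::ₘ M.map Prod.fst) (ha : (some a, swap a b * u) ∉ M'.map Prod.fst) :
    IsDetour u w ((u, swap a b * u) ::ₘ M) (swap a b ::ₘ L)
      (((none, u), (some b, u)) ::ₘ ((some b, u), (some a, swap a b * u)) ::ₘ
        ((some a, swap a b * u), (none, swap a b * u)) ::ₘ M') where
  isWalk := ((h.isWalk.cons _).cons _).cons _
  nodup := by
    have := h.nodup
    have := fun o => h.snd_mem (o, u)
    simp_all
    grind
  snd_mem := by
    have := h.snd_mem
    have := h.isWalk.start_mem
    simp_all
    grind
  subsingleton := by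
    have := fun b => h.snd_mem (some b, u)
    simp_all
  labels := by
    have hdetour : detourLabels (swap a b) = {swap none (some a), swap none (some b)} := by
      simp [detourLabels, Perm.support_swap hab, hab]
    simp only [Multiset.map_cons, Multiset.sum_cons, h.labels, optionLabel_none_some,
      optionLabel_some_none, optionLabel_some_some, label_mul_left, hdetour]
    simp only [Multiset.insert_eq_cons, ← Multiset.singleton_add]
    abel

theorem IsWalk.exists_isDetour (h : IsWalk u w M) (hM : (w ::ₘ M.map Prod.fst).Nodup)
    (hswap : ∀ t ∈ M.map label, t.IsSwap) (hL : L ≤ M.map label) :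
    ∃ M', IsDetour u w M L M' := by
  induction h generalizing L with
  | nil w =>
    obtain rfl : L = 0 := by simpa using hL
    exact ⟨0, .nil w⟩
  | @cons u v w M h ih =>
    obtain ⟨t, rfl⟩ : ∃ t, v = t * u := ⟨v * u⁻¹, by simp⟩
    rw [Multiset.map_cons, Multiset.cons_swap, Multiset.nodup_cons] at hM
    simp only [Multiset.map_cons, label_mul_left, Multiset.forall_mem_cons] at hswap hL
    by_cases htL : t ∈ L
    · obtain ⟨L, rfl⟩ := Multiset.exists_cons_of_mem htL
      obtain ⟨M', hM'⟩ := ih hM.2 hswap.2 ((Multiset.cons_le_cons_iff t).1 hL)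
      obtain ⟨a, b, hab, rfl⟩ := hswap.1
      by_cases ha : (some a, swap a b * u) ∈ M'.map Prod.fst
      · have hb : (some b, swap a b * u) ∉ M'.map Prod.fst :=
          fun hb => hab (hM'.subsingleton ha hb)
        rw [swap_comm a b] at hM' hb ⊢
        exact ⟨_, hM'.cons_detour hab.symm hM.1 hb⟩
      · exact ⟨_, hM'.cons_detour hab hM.1 ha⟩
    · obtain ⟨M', hM'⟩ := ih hM.2 hswap.2 ((Multiset.le_cons_of_notMem htL).1 hL)
      exact ⟨_, hM'.cons hM.1⟩

theorem map_optionCongr_add_map_swap_none :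
    (transpositions β).val.map optionCongr +
      Finset.univ.val.map (fun i => swap none (some i)) = (transpositions (Option β)).val := by
  have hdisjoint : Disjoint ((transpositions β).val.map optionCongr)
      (Finset.univ.val.map fun i : β => swap none (some i)) := by
    refine Multiset.disjoint_left.2 fun {t} ht ht' => ?_
    obtain ⟨s, -, rfl⟩ := Multiset.mem_map.1 ht
    obtain ⟨i, -, hi⟩ := Multiset.mem_map.1 ht'
    simpa using congr($hi none)
  have hinj : Function.Injective fun i : β => swap none (some i) := fun i j hij => by
    simpa using congr($hij none)
  refine (Multiset.Nodup.ext (Multiset.nodup_add.2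
    ⟨(transpositions β).nodup.map optionCongr_injective, Finset.univ.nodup.map hinj, hdisjoint⟩)
    (transpositions (Option β)).nodup).2 fun t => ?_
  simp only [Multiset.mem_add, Multiset.mem_map, Finset.mem_val, mem_transpositions,
    Finset.mem_univ, true_and]
  constructor
  · rintro (⟨_, ⟨a, b, hab, rfl⟩, rfl⟩ | ⟨i, rfl⟩)
    · exact ⟨some a, some b, by simpa using hab, by rw [optionCongr_swap]⟩
    · exact ⟨none, some i, by simp, rfl⟩
  · rintro ⟨_ | a, _ | b, hab, rfl⟩
    · exact absurd rfl hab
    · exact .inr ⟨b, rfl⟩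
    · exact .inr ⟨a, swap_comm _ _⟩
    · exact .inl ⟨_, ⟨a, b, by simpa using hab, rfl⟩, optionCongr_swap a b⟩

theorem map_swap_le_transpositions {c : Perm β} (hc : ∀ i, c (c i) ≠ i) :
    (Finset.univ.val.map fun i => swap i (c i)) ≤ (transpositions β).val := by
  have hne : ∀ i, c i ≠ i := fun i hi => hc i (by rw [hi, hi])
  have hinj : Function.Injective fun i => swap i (c i) := by
    intro i j hij
    by_contra hne'
    have hj : swap j (c j) i = c i := by simpa using (congr($hij i)).symm
    obtain rfl : i = c j := by
      by_contra h
      exact hne i (by rw [← hj, swap_apply_of_ne_of_ne hne' h])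
    exact hc j (by simpa using hj.symm)
  rw [Multiset.le_iff_subset (Finset.univ.nodup.map hinj)]
  intro t ht
  obtain ⟨i, -, rfl⟩ := Multiset.mem_map.1 ht
  exact swap_mem_transpositions (hne i).symm

theorem sum_map_detourLabels_swap {c : Perm β} (hc : ∀ i, c i ≠ i) :
    ((Finset.univ.val.map fun i => swap i (c i)).map detourLabels).sum =
      2 • Finset.univ.val.map fun i => swap none (some i) := by
  have hdetour : ∀ i, detourLabels (swap i (c i)) =
      {swap none (some i)} + {swap none (some (c i))} := fun i => by
    simp [detourLabels, Perm.support_swap (hc i).symm, (hc i).symm, ← Multiset.singleton_add]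
  have hc' : (Finset.univ.val.map fun i => swap none (some (c i))) =
      Finset.univ.val.map fun i => swap none (some i) := by
    conv_rhs => rw [← Multiset.map_univ_val_equiv c, Multiset.map_map]
    rfl
  calc _ = Finset.univ.val.bind fun i =>
          {swap none (some i)} + {swap none (some (c i))} := by
        simp only [Multiset.map_map, Function.comp_def, hdetour]
        rfl
    _ = 2 • Finset.univ.val.map fun i => swap none (some i) := by
        rw [Multiset.bind_add, Multiset.bind_singleton, Multiset.bind_singleton, hc', two_nsmul]

theorem HasRainbowCycle.option [Nonempty β] {c : Perm β} (hc : ∀ i, c (c i) ≠ i) {k : ℕ}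
    (hk : k ≠ 0) (h : HasRainbowCycle β (2 * k)) : HasRainbowCycle (Option β) (2 * k) := by
  obtain ⟨S, M, hM, hS, hlabel⟩ := h
  have hne : ∀ i, c i ≠ i := fun i hi => hc i (by rw [hi, hi])
  obtain ⟨t, ht⟩ : ∃ t, t ∈ transpositions β :=
    ⟨_, swap_mem_transpositions (hne (Classical.arbitrary β)).symm⟩
  obtain ⟨w, hw⟩ : ∃ w, (w, t * w) ∈ M := by
    refine exists_mem_of_mem_map_label ?_
    rw [hlabel, Multiset.mem_nsmul_of_ne_zero (by lia)]
    exact ht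
  obtain ⟨M, rfl⟩ := Multiset.exists_cons_of_mem hw
  rw [Multiset.map_cons, label_mul_left] at hlabel
  have hL : (k • Finset.univ.val.map fun i => swap i (c i)) ≤ M.map label := by
    have hsplit : t ::ₘ k • (transpositions β).val ≤ (2 * k) • (transpositions β).val := by
      rw [two_mul, add_nsmul, ← Multiset.singleton_add]
      exact add_le_add_left (Multiset.singleton_le.2 ((Multiset.mem_nsmul_of_ne_zero hk).2 ht)) _
    calc _ ≤ k • (transpositions β).val := nsmul_le_nsmul_right (map_swap_le_transpositions hc) k
      _ ≤ M.map label := (Multiset.cons_le_cons_iff t).1 (hlabel ▸ hsplit)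
  have hswap : ∀ s ∈ M.map label, s.IsSwap := fun s hs =>
    mem_transpositions.1 (Multiset.mem_of_mem_nsmul (hlabel ▸ Multiset.mem_cons_of_mem hs))
  obtain ⟨M', hM'⟩ := hM.isWalk.exists_isDetour (by simpa [← hM.2] using hS) hswap hL
  refine ⟨_, _, hM'.isWalk.isTour.map Perm.decomposeOption.symm,
    hM'.nodup.map (Equiv.injective _), ?_⟩
  calc _ = optionCongr t ::ₘ M'.map optionLabel := by
        rw [Multiset.map_map, Multiset.map_cons]
        exact congrArg (· ::ₘ _) (optionLabel_none_none t w)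
    _ = (t ::ₘ M.map label).map optionCongr +
        ((k • Finset.univ.val.map fun i => swap i (c i)).map detourLabels).sum := by
        rw [hM'.labels, Multiset.map_cons, Multiset.cons_add]
    _ = (2 * k) • (transpositions (Option β)).val := by
        rw [hlabel, Multiset.map_nsmul, Multiset.map_nsmul, Multiset.sum_nsmul,
          sum_map_detourLabels_swap hne, ← mul_nsmul, ← nsmul_add,
          map_optionCongr_add_map_swap_none]

end Extension

section Fin

theorem HasRainbowCycle.fin_succ {n k : ℕ} (hn : 3 ≤ n) (hk : k ≠ 0)
    (h : HasRainbowCycle (Fin n) (2 * k)) : HasRainbowCycle (Fin (n + 1)) (2 * k) := by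
  obtain ⟨n, rfl⟩ := Nat.exists_eq_add_of_le' hn
  have hc : ∀ i : Fin (n + 3), i + 1 + 1 ≠ i := fun i => by
    rw [add_assoc, Ne, add_eq_left, Fin.ext_iff, Fin.val_add]
    simp [Nat.mod_eq_of_lt (by lia : 2 < n + 3)]
  exact (h.option (c := Equiv.addRight 1) hc hk).congr (finSuccEquiv _).symm

theorem hasRainbowCycle_fin {n m : ℕ} (hm : 2 ≤ m) (hmn : m ≤ n) :
    HasRainbowCycle (Fin n) (2 * (m - 2).factorial) := by
  have hdiag : ∀ k, 2 ≤ k → HasRainbowCycle (Fin k) (2 * (k - 2).factorial) := by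
    intro k hk
    obtain ⟨k, rfl⟩ := Nat.exists_eq_add_of_le' hk
    exact (hasGrayCode_fin k).hasRainbowCycle
  induction n, hmn using Nat.le_induction with
  | base => exact hdiag m hm
  | succ n hmn ih =>
    by_cases hn : 3 ≤ n
    · exact ih.fin_succ hn (Nat.factorial_ne_zero _)
    · obtain ⟨rfl, rfl⟩ : m = 2 ∧ n = 2 := by lia
      exact hdiag 3 (by lia)

theorem HasRainbowCycle.exists_fin {n r : ℕ} (hn : 2 ≤ n) (hr : r ≠ 0)
    (h : HasRainbowCycle (Fin n) r) :
    ∃ (N : ℕ) (π : Fin (N + 1) → Perm (Fin n)), Function.Injective π ∧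
      (∀ s, ∃ i j, i ≠ j ∧ π (s + 1) = swap i j * π s) ∧
      ∀ i j, i ≠ j → (Finset.univ.filter fun s => π (s + 1) = swap i j * π s).card = r := by
  obtain ⟨S, M, hM, hS, hlabel⟩ := h
  have hmem : swap ⟨0, by lia⟩ ⟨1, by lia⟩ ∈ M.map label := by
    rw [hlabel, Multiset.mem_nsmul_of_ne_zero hr]
    exact swap_mem_transpositions (by simp)
  obtain ⟨N, π, rfl, rfl⟩ := hM.exists_fin (by rintro rfl; simp at hmem)
  rw [Multiset.map_map] at hlabel
  refine ⟨N, π, fun s t => Multiset.inj_on_of_nodup_map hS s (Finset.mem_univ_val s) t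
    (Finset.mem_univ_val t), fun s => ?_, fun i j hij => ?_⟩
  · have hs : label (π s, π (s + 1)) ∈ transpositions (Fin n) :=
      Multiset.mem_of_mem_nsmul (hlabel ▸ Multiset.mem_map_of_mem _ (Finset.mem_univ_val s))
    obtain ⟨i, j, hij, hs⟩ := mem_transpositions.1 hs
    exact ⟨i, j, hij, label_eq_iff.1 hs⟩
  · calc _ = (Finset.univ.val.map (label ∘ fun s => (π s, π (s + 1)))).count (swap i j) := by
          simp only [Multiset.count_map, Function.comp_apply, eq_comm (a := swap i j), label_eq_iff]
          rfl
      _ = r := by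
          rw [hlabel, Multiset.count_nsmul, Multiset.count_eq_one_of_mem (Finset.nodup _)
            (swap_mem_transpositions hij), mul_one]

end Fin

end RainbowCycle

/-- For every `n ≥ 2` and every `m` with `2 ≤ m ≤ n`, there exists a
`2*(m−2)!`-rainbow cycle for `S_n` under all transpositions: a cyclically indexed
family `π : Fin (N+1) → Perm (Fin n)` of pairwise distinct permutations in which any
two cyclically consecutive permutations differ by applying a transposition
(`π (s+1) = swap i j * π s`), and each of the `n(n−1)/2` transpositions is applied
exactly `2*(m−2)!` times around the cycle. -/
theorem balanced_rainbow_cycle_all_transpositions (n m : ℕ) (hn : 2 ≤ n)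
    (hm : 2 ≤ m) (hmn : m ≤ n) :
    ∃ (N : ℕ) (π : Fin (N + 1) → Equiv.Perm (Fin n)),
      Function.Injective π ∧
      (∀ s : Fin (N + 1), ∃ i j : Fin n, i ≠ j ∧ π (s + 1) = Equiv.swap i j * π s) ∧
      (∀ i j : Fin n, i ≠ j →
        (Finset.univ.filter
            (fun s : Fin (N + 1) => π (s + 1) = Equiv.swap i j * π s)).card
          = 2 * Nat.factorial (m - 2)) := by
  have h := RainbowCycle.hasRainbowCycle_fin hm hmn
  exact h.exists_fin hn (by positivity)
end

section
/- Let n ≥ 2 be even. Then there exists a balanced Gray code for S_n under cyclically adjacent position-swaps: a cyclically ordered list of all n! permutations of [n], each appearing exactly once, in which any two cyclically consecutive permutations differ by a cyclically adjacent position-swap, and each of the n cyclically adjacent position-swaps is used exactly n!/n = (n−1)! times around the cycle. -/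
/-!
Let `ρ` be the rotation of the `n` positions; conjugation by `ρ` permutes the `n` cyclically
adjacent swaps cyclically. Suppose that a walk `g` by cyclically adjacent swaps starts at `1`,
visits the whole stabilizer of the last position, and then steps to `τ * ρ⁻¹`, where `τ` fixes the
last position and `τ ^ n = 1`. The translates `τ ^ q * g * ρ ^ (-q)` for `q < n` join up to a closed
walk through all of `S_n`: the position of the entry `n` in a permutation tells to which translate
the permutation belongs. For each of the `(n - 1)!` steps of `g`, the `n` translates of the step use
each swap exactly once.

For even `n ≥ 4` such a `g` comes from a Hamiltonian path in the bubble-sort graph of `S_(n-1)`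
from `1` to `τ * ρ'⁻¹`, where `τ` is an adjacent swap and `ρ'` the rotation of `n - 1` positions.
As `n - 1` is odd, `ρ'` is even and the end point is odd, so for `n ≥ 6` the path exists because
the bubble-sort graph on at least four letters is Hamilton-laceable (Tchuente).
-/

open Equiv

section SpanningPath

variable {V W : Type*} {G : SimpleGraph V} {H : SimpleGraph W} {s t : Set V} {x y x' y' : V}

/-- There is a path of `G` from `x` to `y` whose set of vertices is exactly `s`. -/
def HasSpanningPath (G : SimpleGraph V) (s : Set V) (x y : V) : Prop :=
  ∃ p : G.Walk x y, p.IsPath ∧ {v | v ∈ p.support} = s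

theorem HasSpanningPath.append (hs : HasSpanningPath G s x y) (hyx : G.Adj y x')
    (ht : HasSpanningPath G t x' y') (hst : Disjoint s t) : HasSpanningPath G (s ∪ t) x y' := by
  obtain ⟨p, hp, rfl⟩ := hs
  obtain ⟨q, hq, rfl⟩ := ht
  have support_eq : (p.append (.cons hyx q)).support = p.support ++ q.support := by
    simp [SimpleGraph.Walk.support_append]
  refine ⟨p.append (.cons hyx q), ?_, ?_⟩
  · rw [SimpleGraph.Walk.isPath_def, support_eq, List.nodup_append']
    exact ⟨hp.support_nodup, hq.support_nodup, fun v hp hq => Set.disjoint_left.1 hst hp hq⟩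
  · ext v
    simp [support_eq]

theorem HasSpanningPath.map (hs : HasSpanningPath G s x y) (f : G →g H)
    (hf : Function.Injective f) : HasSpanningPath H (f '' s) (f x) (f y) := by
  obtain ⟨p, hp, rfl⟩ := hs
  refine ⟨p.map f, hp.map hf, ?_⟩
  ext v
  simp

theorem HasSpanningPath.exists_split {β : Type*} (hs : HasSpanningPath G s x y) (f : V → β)
    {u v : V} (hu : u ∈ s) (hv : v ∈ s) (hf : f u ≠ f v) :
    ∃ s₁ s₂ a b, s₁ ∪ s₂ = s ∧ Disjoint s₁ s₂ ∧ G.Adj a b ∧ f a ≠ f b ∧ a ∈ s₁ ∧ b ∈ s₂ ∧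
      HasSpanningPath G s₁ x a ∧ HasSpanningPath G s₂ b y := by
  classical
  obtain ⟨p, hp, rfl⟩ := hs
  obtain ⟨w, hw, hwx⟩ : ∃ w ∈ p.support, f w ≠ f x := by
    by_contra! h
    exact hf ((h u hu).trans (h v hv).symm)
  obtain ⟨d, hd, hda, hdb⟩ :=
    (p.takeUntil w hw).exists_boundary_dart {z | f z = f x} rfl hwx
  obtain ⟨p₁, p₂, rfl⟩ := (p.isSubwalk_toWalk_iff_mem_darts d.adj).2
    (p.darts_takeUntil_subset_darts hw hd)
  rw [SimpleGraph.Walk.isPath_def] at hp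
  have support_eq : ((p₁.append d.adj.toWalk).append p₂).support = p₁.support ++ p₂.support := by
    simp [SimpleGraph.Walk.support_append]
  rw [support_eq, List.nodup_append'] at hp
  refine ⟨_, _, d.fst, d.snd, ?_, ?_, d.adj, fun h => hdb (h.symm.trans hda), ?_, ?_,
    ⟨p₁, .mk' hp.1, rfl⟩, ⟨p₂, .mk' hp.2.1, rfl⟩⟩
  · ext z
    simp [support_eq]
  · exact Set.disjoint_left.2 fun z h₁ h₂ => hp.2.2 h₁ h₂
  · exact p₁.end_mem_support
  · exact p₂.start_mem_support

end SpanningPath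

section BubbleSort

variable {k : ℕ}

/-- The swap of the positions `i` and `i + 1`. -/
def adjacentSwap (i : Fin k) : Perm (Fin (k + 1)) := swap i.castSucc i.succ

/-- The bubble-sort graph on `Perm (Fin (k + 1))`: right multiplication by `adjacentSwap i` swaps
the entries of a word at adjacent positions. -/
def bubbleSortGraph (k : ℕ) : SimpleGraph (Perm (Fin (k + 1))) :=
  SimpleGraph.mulCayley (Set.range adjacentSwap)

theorem adjacentSwap_ne_one (i : Fin k) : adjacentSwap i ≠ 1 := by
  simp [adjacentSwap, swap_eq_one_iff, i.castSucc_lt_succ.ne]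

theorem bubbleSortGraph_adj {x y : Perm (Fin (k + 1))} :
    (bubbleSortGraph k).Adj x y ↔ ∃ i, y = x * adjacentSwap i := by
  rw [bubbleSortGraph, SimpleGraph.mulCayley_adj']
  constructor
  · rintro ⟨-, _, ⟨i, rfl⟩, rfl | rfl⟩
    · exact ⟨i, rfl⟩
    · exact ⟨i, by simp [adjacentSwap, mul_assoc]⟩
  · rintro ⟨i, rfl⟩
    exact ⟨by simpa using adjacentSwap_ne_one i, _, ⟨i, rfl⟩, .inl rfl⟩

theorem bubbleSortGraph_adj_mul (x : Perm (Fin (k + 1))) (i : Fin k) :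
    (bubbleSortGraph k).Adj x (x * adjacentSwap i) :=
  bubbleSortGraph_adj.2 ⟨i, rfl⟩

theorem sign_mul_swap {α : Type*} [Fintype α] [DecidableEq α] (x : Perm α) {i j : α} (h : i ≠ j) :
    Perm.sign (x * swap i j) = -Perm.sign x := by
  simp [Perm.sign_swap h]

theorem sign_of_bubbleSortGraph_adj {x y : Perm (Fin (k + 1))} (h : (bubbleSortGraph k).Adj x y) :
    Perm.sign y = -Perm.sign x := by
  obtain ⟨i, rfl⟩ := bubbleSortGraph_adj.1 h
  exact sign_mul_swap x i.castSucc_lt_succ.ne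

theorem exists_walk_of_word (x : Perm (Fin (k + 1))) (w : List (Fin k)) :
    ∃ p : (bubbleSortGraph k).Walk x (x * (w.map adjacentSwap).prod),
      p.support = w.scanl (fun z i => z * adjacentSwap i) x := by
  induction w generalizing x with
  | nil => exact ⟨.copy .nil rfl (by simp), by simp⟩
  | cons i w ih =>
    obtain ⟨p, hp⟩ := ih (x * adjacentSwap i)
    exact ⟨.copy (.cons (bubbleSortGraph_adj_mul x i) p) rfl (by simp [mul_assoc]), by simp [hp]⟩

theorem hasSpanningPath_of_word (w : List (Fin k)) (hlen : w.length + 1 = (k + 1).factorial)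
    (hw : (w.scanl (fun z i => z * adjacentSwap i) 1).Nodup) :
    HasSpanningPath (bubbleSortGraph k) Set.univ 1 (w.map adjacentSwap).prod := by
  obtain ⟨p, hp⟩ := exists_walk_of_word 1 w
  have hpath : p.IsPath := .mk' (hp ▸ hw)
  have hlength : p.length = w.length := by
    simpa only [SimpleGraph.Walk.length_support, List.length_scanl, Nat.add_right_cancel_iff]
      using congrArg List.length hp
  have hham : p.IsHamiltonian := by
    rw [SimpleGraph.Walk.isHamiltonian_iff_isPath_and_length_eq, Fintype.card_perm,
      Fintype.card_fin, ← hlen, hlength]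
    exact ⟨hpath, rfl⟩
  exact one_mul (w.map adjacentSwap).prod ▸ ⟨p, hpath, hham.setOfPred_support⟩

/-- The inclusion of `Perm (Fin k)` into `Perm (Fin (k + 1))` as the stabilizer of the last
position. -/
def extendLast (k : ℕ) : Perm (Fin k) →* Perm (Fin (k + 1)) :=
  Perm.extendDomainHom (finSuccAboveEquiv (Fin.last k))

@[simp]
theorem extendLast_castSucc (h : Perm (Fin k)) (i : Fin k) :
    extendLast k h i.castSucc = (h i).castSucc := by
  simpa only [extendLast, Perm.extendDomainHom_apply, finSuccAboveEquiv_apply, Fin.succAbove_last]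
    using Perm.extendDomain_apply_image h (finSuccAboveEquiv (Fin.last k)) i

@[simp]
theorem extendLast_last (h : Perm (Fin k)) : extendLast k h (Fin.last k) = Fin.last k :=
  Perm.extendDomain_apply_not_subtype _ _ (by simp)

theorem extendLast_injective (k : ℕ) : Function.Injective (extendLast k) :=
  Perm.extendDomainHom_injective _

@[simp]
theorem sign_extendLast (h : Perm (Fin k)) : Perm.sign (extendLast k h) = Perm.sign h :=
  Perm.sign_extendDomain _ _

theorem extendLast_adjacentSwap (i : Fin k) :
    extendLast (k + 1) (adjacentSwap i) = adjacentSwap i.castSucc := by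
  ext1 j
  refine Fin.lastCases ?_ (fun j => ?_) j
  · rw [extendLast_last, adjacentSwap, swap_apply_of_ne_of_ne] <;> simp [Fin.ext_iff] <;> omega
  · rw [extendLast_castSucc]
    simp only [adjacentSwap, swap_apply_def, Fin.castSucc_inj, ← Fin.castSucc_succ]
    split_ifs <;> rfl

theorem exists_extendLast_eq {z : Perm (Fin (k + 1))} (hz : z (Fin.last k) = Fin.last k) :
    ∃ h, extendLast k h = z := by
  have hz' : ∀ i, z i ≠ Fin.last k ↔ i ≠ Fin.last k := fun i => by
    rw [← z.injective.ne_iff (x := i), hz]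
  refine ⟨(finSuccAboveEquiv (Fin.last k)).symm.permCongr (z.subtypePerm hz'), ?_⟩
  ext1 j
  by_cases hj : j = Fin.last k
  · rw [hj, extendLast_last, hz]
  · exact (Perm.extendDomain_apply_subtype (p := (· ≠ Fin.last k)) _ _ hj).trans (by simp)

end BubbleSort

section Laceability

variable {k : ℕ}

/-- Laceability of the bubble-sort graph, whose two colour classes are the even and the odd
permutations: opposite colours are joined by a Hamiltonian path. By left translation it is enough
to consider paths that start at the identity. -/
def IsLaceable (k : ℕ) : Prop :=
  ∀ y : Perm (Fin (k + 1)), Perm.sign y = -1 → HasSpanningPath (bubbleSortGraph k) Set.univ 1 y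

/-- The permutations whose value at the last position lies in `A`. -/
def layers (A : Finset (Fin (k + 1))) : Set (Perm (Fin (k + 1))) :=
  {z | z (Fin.last k) ∈ A}

theorem layers_univ : layers (Finset.univ : Finset (Fin (k + 1))) = Set.univ :=
  Set.eq_univ_of_forall fun z => Finset.mem_univ (z (Fin.last k))

theorem layers_union (A B : Finset (Fin (k + 1))) : layers A ∪ layers B = layers (A ∪ B) :=
  Set.ext fun _ => Finset.mem_union.symm

theorem disjoint_layers {A B : Finset (Fin (k + 1))} (h : Disjoint A B) :
    Disjoint (layers A) (layers B) :=
  Set.disjoint_left.2 fun _ hA hB => Finset.disjoint_left.1 h hA hB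

/-- Left translation by `x` composed with `extendLast`, as an embedding of bubble-sort graphs. -/
def layerHom (x : Perm (Fin (k + 2))) : bubbleSortGraph k →g bubbleSortGraph (k + 1) where
  toFun h := x * extendLast (k + 1) h
  map_rel' {a b} h := by
    obtain ⟨i, rfl⟩ := bubbleSortGraph_adj.1 h
    rw [map_mul, extendLast_adjacentSwap, ← mul_assoc]
    exact bubbleSortGraph_adj_mul _ _

theorem layerHom_injective (x : Perm (Fin (k + 2))) : Function.Injective (layerHom x) :=
  (mul_right_injective x).comp (extendLast_injective _)

theorem range_layerHom (x : Perm (Fin (k + 2))) :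
    Set.range (layerHom x) = layers {x (Fin.last (k + 1))} := by
  ext z
  simp only [layers, Finset.mem_singleton, Set.mem_ofPred_eq]
  constructor
  · rintro ⟨h, rfl⟩
    exact congrArg x (extendLast_last h)
  · intro hz
    obtain ⟨h, hh⟩ := exists_extendLast_eq (z := x⁻¹ * z) (by simp [hz])
    exact ⟨h, (congrArg (x * ·) hh).trans (mul_inv_cancel_left x z)⟩

theorem IsLaceable.hasSpanningPath_layer (hlace : IsLaceable k) {x y : Perm (Fin (k + 2))}
    (hlast : y (Fin.last (k + 1)) = x (Fin.last (k + 1)))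
    (hsign : Perm.sign y = -Perm.sign x) :
    HasSpanningPath (bubbleSortGraph (k + 1)) (layers {x (Fin.last (k + 1))}) x y := by
  obtain ⟨h, hh⟩ : y ∈ Set.range (layerHom x) := by
    rw [range_layerHom]
    exact Finset.mem_singleton.2 hlast
  have hx : layerHom x 1 = x := by simp [layerHom]
  have hh_sign : Perm.sign h = -1 := by
    rw [← hh] at hsign
    simpa [layerHom, ← mul_neg_one (Perm.sign x), -mul_neg] using hsign
  have := (hlace h hh_sign).map (layerHom x) (layerHom_injective x)
  rwa [Set.image_univ, range_layerHom, hx, hh] at this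

theorem exists_layer_exit (hk : 2 ≤ k) (x : Perm (Fin (k + 2))) {b : Fin (k + 2)}
    (hb : b ≠ x (Fin.last (k + 1))) :
    ∃ e : Perm (Fin (k + 2)), e (Fin.last (k + 1)) = x (Fin.last (k + 1)) ∧
      e (Fin.last k).castSucc = b ∧ Perm.sign e = -Perm.sign x := by
  have hprev : (Fin.last k).castSucc ≠ Fin.last (k + 1) := (Fin.castSucc_lt_last _).ne
  by_cases hxb : x (Fin.last k).castSucc = b
  · have swap_zero_one_apply {i : Fin (k + 2)} (hi : 2 ≤ (i : ℕ)) : swap 0 1 i = i := by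
      refine swap_apply_of_ne_of_ne ?_ ?_ <;> rintro rfl <;> simp at hi
    exact ⟨x * swap 0 1, congrArg x (swap_zero_one_apply (Nat.le_succ_of_le hk)),
      (congrArg x (swap_zero_one_apply hk)).trans hxb, sign_mul_swap x zero_ne_one⟩
  · have hlast : x.symm b ≠ Fin.last (k + 1) := fun h => hb (by simp [← h])
    exact ⟨x * swap (Fin.last k).castSucc (x.symm b),
      by simp [swap_apply_of_ne_of_ne hprev.symm hlast.symm], by simp,
      sign_mul_swap x fun h => hxb (by simp [h])⟩

theorem mul_adjacentSwap_apply_last (x : Perm (Fin (k + 2))) :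
    (x * adjacentSwap (Fin.last k)) (Fin.last (k + 1)) = x (Fin.last k).castSucc :=
  congrArg x (swap_apply_right _ _)

theorem IsLaceable.hasSpanningPath_layers_of_erase (hk : 2 ≤ k) (hlace : IsLaceable k)
    {x y : Perm (Fin (k + 2))} {A : Finset (Fin (k + 2))} {b : Fin (k + 2)}
    (hx : x (Fin.last (k + 1)) ∈ A) (hb : b ∈ A.erase (x (Fin.last (k + 1))))
    (hA : ∀ e : Perm (Fin (k + 2)), e (Fin.last (k + 1)) = b → Perm.sign e = Perm.sign x →
      HasSpanningPath (bubbleSortGraph (k + 1)) (layers (A.erase (x (Fin.last (k + 1))))) e y) :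
    HasSpanningPath (bubbleSortGraph (k + 1)) (layers A) x y := by
  obtain ⟨e, he_last, he_prev, he_sign⟩ := exists_layer_exit hk x (Finset.ne_of_mem_erase hb)
  have hadj := bubbleSortGraph_adj_mul e (Fin.last k)
  have he'_last := (mul_adjacentSwap_apply_last e).trans he_prev
  have he'_sign : Perm.sign (e * adjacentSwap (Fin.last k)) = Perm.sign x := by
    rw [sign_of_bubbleSortGraph_adj hadj, he_sign, neg_neg]
  have := (hlace.hasSpanningPath_layer he_last he_sign).append hadj (hA _ he'_last he'_sign)
    (disjoint_layers (by simp))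
  rwa [layers_union, ← Finset.insert_eq, Finset.insert_erase hx] at this

theorem IsLaceable.hasSpanningPath_layers (hk : 2 ≤ k) (hlace : IsLaceable k)
    {A : Finset (Fin (k + 2))} {x y : Perm (Fin (k + 2))} (hx : x (Fin.last (k + 1)) ∈ A)
    (hy : y (Fin.last (k + 1)) ∈ A) (hxy : x (Fin.last (k + 1)) ≠ y (Fin.last (k + 1)))
    (hsign : Perm.sign y = -Perm.sign x) :
    HasSpanningPath (bubbleSortGraph (k + 1)) (layers A) x y := by
  induction A using Finset.strongInduction generalizing x with
  | H A ih =>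
  have hyA := Finset.mem_erase.2 ⟨hxy.symm, hy⟩
  by_cases hA : A.erase (x (Fin.last (k + 1))) = {y (Fin.last (k + 1))}
  · refine hlace.hasSpanningPath_layers_of_erase hk hx hyA fun e he he_sign => ?_
    rw [hA, ← he]
    exact hlace.hasSpanningPath_layer he.symm (by rw [hsign, he_sign])
  · obtain ⟨b, hbA, hby⟩ :
        ∃ b ∈ A.erase (x (Fin.last (k + 1))), b ≠ y (Fin.last (k + 1)) := by
      by_contra! h
      exact hA (Finset.eq_singleton_iff_unique_mem.2 ⟨hyA, h⟩)
    refine hlace.hasSpanningPath_layers_of_erase hk hx hbA ?_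
    rintro e rfl he_sign
    exact ih _ (Finset.erase_ssubset hx) hbA hyA hby (by rw [hsign, he_sign])

theorem IsLaceable.hasSpanningPath_detour (hk : 2 ≤ k) (hlace : IsLaceable k)
    {a b : Perm (Fin (k + 2))} (hab : (bubbleSortGraph (k + 1)).Adj a b)
    (hlast : b (Fin.last (k + 1)) = a (Fin.last (k + 1)))
    (hprev : a (Fin.last k).castSucc ≠ b (Fin.last k).castSucc) :
    HasSpanningPath (bubbleSortGraph (k + 1)) (layers {a (Fin.last (k + 1))}ᶜ)
      (a * adjacentSwap (Fin.last k)) (b * adjacentSwap (Fin.last k)) := by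
  refine hlace.hasSpanningPath_layers hk ?_ ?_ ?_ ?_
  · simp [mul_adjacentSwap_apply_last]
  · simp [mul_adjacentSwap_apply_last, ← hlast]
  · simpa [mul_adjacentSwap_apply_last] using hprev
  · rw [sign_of_bubbleSortGraph_adj (bubbleSortGraph_adj_mul b _),
      sign_of_bubbleSortGraph_adj (bubbleSortGraph_adj_mul a _), sign_of_bubbleSortGraph_adj hab]

theorem IsLaceable.hasSpanningPath_of_last_eq (hk : 2 ≤ k) (hlace : IsLaceable k)
    {x y : Perm (Fin (k + 2))} (hlast : y (Fin.last (k + 1)) = x (Fin.last (k + 1)))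
    (hsign : Perm.sign y = -Perm.sign x) :
    HasSpanningPath (bubbleSortGraph (k + 1)) (layers Finset.univ) x y := by
  -- Break a spanning path of the layer of `x` at an edge `a`-`b` along which the next-to-last value
  -- changes, and insert a detour through all other layers there.
  have h0_last : (0 : Fin (k + 2)) ≠ Fin.last (k + 1) := Fin.last_pos.ne
  have h0_prev : (0 : Fin (k + 2)) ≠ (Fin.last k).castSucc := by
    rw [Ne, Fin.ext_iff, Fin.val_zero, Fin.val_castSucc, Fin.val_last]
    omega
  obtain ⟨w, hw_last, hw_prev, -⟩ := exists_layer_exit hk x (x.injective.ne h0_last)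
  obtain ⟨s₁, s₂, a, b, hunion, hdisj, hab, hprev, ha, hb, hs₁, hs₂⟩ :=
    (hlace.hasSpanningPath_layer hlast hsign).exists_split (· (Fin.last k).castSucc)
      (Finset.mem_singleton_self _) (Finset.mem_singleton.2 hw_last)
      (hw_prev ▸ x.injective.ne h0_prev.symm)
  have ha_last : a (Fin.last (k + 1)) = x (Fin.last (k + 1)) :=
    Finset.mem_singleton.1 (hunion.le (.inl ha))
  have hb_last : b (Fin.last (k + 1)) = x (Fin.last (k + 1)) :=
    Finset.mem_singleton.1 (hunion.le (.inr hb))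
  have detour := hlace.hasSpanningPath_detour hk hab (hb_last.trans ha_last.symm) hprev
  rw [ha_last] at detour
  have hdetour := disjoint_layers (disjoint_compl_right (a := {x (Fin.last (k + 1))}))
  rw [← hunion, Set.disjoint_union_left] at hdetour
  have := hs₁.append (bubbleSortGraph_adj_mul a _)
    (detour.append (bubbleSortGraph_adj_mul b _).symm hs₂ hdetour.2.symm)
    (Set.disjoint_union_right.2 ⟨hdetour.1, hdisj⟩)
  rwa [Set.union_left_comm, hunion, layers_union, Finset.union_comm, Finset.union_compl] at this

theorem IsLaceable.succ (hk : 2 ≤ k) (hlace : IsLaceable k) : IsLaceable (k + 1) := by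
  intro y hy
  have hsign : Perm.sign y = -Perm.sign (1 : Perm (Fin (k + 2))) := by rw [hy, Perm.sign_one]
  rw [← layers_univ]
  by_cases hlast : y (Fin.last (k + 1)) = (1 : Perm (Fin (k + 2))) (Fin.last (k + 1))
  · exact hlace.hasSpanningPath_of_last_eq hk hlast hsign
  · exact hlace.hasSpanningPath_layers hk (Finset.mem_univ _) (Finset.mem_univ _)
      (Ne.symm hlast) hsign

/-- Words for Hamiltonian paths of `bubbleSortGraph 3` from the identity to each odd permutation,
found by computer search. -/
def oddPathWords : List (List (Fin 3)) :=
  [[0, 1, 0, 1, 0, 2, 0, 1, 0, 1, 0, 2, 0, 1, 2, 1, 0, 1, 0, 1, 2, 1, 0],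
   [0, 1, 0, 1, 0, 2, 0, 1, 0, 1, 0, 2, 1, 0, 1, 2, 1, 0, 1, 0, 1, 2, 1],
   [0, 1, 0, 1, 0, 2, 0, 1, 0, 1, 2, 1, 2, 1, 0, 1, 0, 1, 2, 1, 0, 1, 2],
   [0, 1, 0, 1, 0, 2, 0, 1, 0, 2, 0, 1, 0, 1, 0, 2, 1, 2, 0, 2, 1, 0, 1],
   [0, 1, 0, 1, 0, 2, 0, 1, 0, 2, 0, 1, 0, 1, 2, 1, 0, 1, 2, 0, 2, 1, 2],
   [0, 1, 0, 1, 0, 2, 0, 1, 0, 2, 1, 2, 1, 2, 0, 2, 1, 0, 1, 2, 1, 0, 1],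
   [0, 1, 0, 1, 0, 2, 0, 1, 2, 1, 0, 1, 2, 1, 0, 1, 2, 0, 2, 1, 2, 1, 2],
   [0, 1, 0, 1, 0, 2, 1, 0, 1, 2, 1, 2, 1, 0, 1, 0, 1, 2, 1, 0, 1, 2, 1],
   [0, 1, 0, 1, 2, 1, 0, 1, 2, 1, 2, 1, 0, 1, 0, 1, 2, 1, 0, 1, 2, 1, 2],
   [0, 1, 0, 2, 1, 0, 1, 2, 1, 2, 1, 0, 1, 2, 0, 2, 1, 2, 1, 0, 1, 2, 1],
   [0, 1, 2, 1, 0, 1, 2, 1, 2, 1, 0, 1, 0, 1, 2, 1, 2, 0, 2, 1, 2, 1, 2],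
   [1, 0, 1, 0, 2, 0, 1, 0, 1, 0, 2, 0, 1, 2, 1, 0, 1, 0, 1, 2, 1, 0, 2]]

set_option maxRecDepth 100000 in
theorem nodup_of_mem_oddPathWords :
    ∀ w ∈ oddPathWords, (w.scanl (fun x i => x * adjacentSwap i) 1).Nodup := by
  decide +kernel

set_option maxRecDepth 100000 in
theorem exists_mem_oddPathWords : ∀ y : Perm (Fin 4), Perm.sign y = -1 →
    ∃ w ∈ oddPathWords, w.length + 1 = (3 + 1).factorial ∧ (w.map adjacentSwap).prod = y := by
  decide +kernel

theorem isLaceable_three : IsLaceable 3 := by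
  intro y hy
  obtain ⟨w, hw, hlen, rfl⟩ := exists_mem_oddPathWords y hy
  exact hasSpanningPath_of_word w hlen (nodup_of_mem_oddPathWords w hw)

theorem isLaceable_of_three_le (hk : 3 ≤ k) : IsLaceable k := by
  induction k, hk using Nat.le_induction with
  | base => exact isLaceable_three
  | succ k hk ih => exact ih.succ (by omega)

theorem exists_hasSpanningPath_to_inv_finRotate (hk : Even k) :
    ∃ τ : Perm (Fin (k + 1)), τ ^ 2 = 1 ∧
      HasSpanningPath (bubbleSortGraph k) Set.univ 1 (τ * (finRotate (k + 1))⁻¹) := by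
  obtain rfl | rfl | hk3 : k = 0 ∨ k = 2 ∨ 3 ≤ k := by
    obtain ⟨m, rfl⟩ := hk
    omega
  · exact ⟨1, one_pow 2, Subsingleton.elim 1 (1 * (finRotate 1)⁻¹) ▸
      hasSpanningPath_of_word [] rfl (List.nodup_singleton _)⟩
  · have hend : (([1, 0, 1, 0, 1] : List (Fin 2)).map adjacentSwap).prod =
        swap 1 2 * (finRotate 3)⁻¹ := by decide
    exact ⟨swap 1 2, by decide, hend ▸ hasSpanningPath_of_word _ rfl (by decide)⟩
  · refine ⟨swap 0 1, by rw [sq, swap_mul_self], isLaceable_of_three_le hk3 _ ?_⟩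
    obtain ⟨m, rfl⟩ := Nat.exists_eq_add_of_le' hk3
    simp [hk.neg_one_pow]

end Laceability

section Lift

open scoped Nat

variable {m : ℕ}

theorem val_finRotate_pow_apply (q : ℕ) (j : Fin (m + 1)) :
    ((finRotate (m + 1) ^ q) j : ℕ) = (j + q) % (m + 1) := by
  induction q with
  | zero => exact (Nat.mod_eq_of_lt j.isLt).symm
  | succ q ih => simp [pow_succ', ih, Fin.val_add, add_assoc]

theorem finRotate_pow_self : finRotate (m + 1) ^ (m + 1) = 1 := by
  ext j
  rw [val_finRotate_pow_apply, Nat.add_mod_right, Nat.mod_eq_of_lt j.isLt, Perm.one_apply]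

theorem eq_of_finRotate_pow_apply_eq {q q' : ℕ} (hq : q < m + 1) (hq' : q' < m + 1)
    {j : Fin (m + 1)} (h : (finRotate (m + 1) ^ q) j = (finRotate (m + 1) ^ q') j) : q = q' := by
  have h := congrArg Fin.val h
  simp only [val_finRotate_pow_apply] at h
  exact (Nat.ModEq.add_left_cancel' _ h).eq_of_lt_of_lt hq hq'

theorem exists_finRotate_pow_apply_eq (j i : Fin (m + 1)) :
    ∃ q < m + 1, (finRotate (m + 1) ^ q) j = i := by
  have hinj : Function.Injective fun q : Fin (m + 1) => (finRotate (m + 1) ^ (q : ℕ)) j :=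
    fun q q' h => Fin.ext (eq_of_finRotate_pow_apply_eq q.isLt q'.isLt h)
  obtain ⟨q, hq⟩ := Finite.surjective_of_injective hinj i
  exact ⟨q, q.isLt, hq⟩

/-- The swap of the positions `i` and `i + 1`, where the last position is followed by the first. -/
def cyclicSwap (i : Fin (m + 1)) : Perm (Fin (m + 1)) := swap i (finRotate (m + 1) i)

theorem cyclicSwap_finRotate_pow (q : ℕ) (i : Fin (m + 1)) :
    cyclicSwap ((finRotate (m + 1) ^ q) i) =
      finRotate (m + 1) ^ q * cyclicSwap i * (finRotate (m + 1) ^ q)⁻¹ := by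
  rw [cyclicSwap, cyclicSwap, ← swap_apply_apply, ← Perm.mul_apply, (Commute.self_pow _ _).eq,
    Perm.mul_apply]

/-- A walk `g 0, …, g (m !)` of cyclically adjacent swaps from `1` to `τ * (finRotate (m + 1))⁻¹`
that enumerates the stabilizer of the last position before its final step; the step from `g r` to
`g (r + 1)` swaps the positions `t r` and `t r + 1`. -/
structure IsFundamentalWalk (τ : Perm (Fin (m + 1))) (g : ℕ → Perm (Fin (m + 1)))
    (t : ℕ → Fin (m + 1)) : Prop where
  zero : g 0 = 1
  factorial : g (m !) = τ * (finRotate (m + 1))⁻¹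
  succ : ∀ r < m !, g (r + 1) = g r * cyclicSwap (t r)
  apply_last : ∀ r < m !, g r (Fin.last m) = Fin.last m
  injOn : Set.InjOn g (Set.Iio (m !))

/-- The concatenation of the translates `τ ^ q * g * (finRotate (m + 1) ^ q)⁻¹` of a fundamental
walk `g` for `q = 0, 1, 2, …`. -/
def unrolledWalk (τ : Perm (Fin (m + 1))) (g : ℕ → Perm (Fin (m + 1))) (s : ℕ) :
    Perm (Fin (m + 1)) :=
  τ ^ (s / m !) * g (s % m !) * (finRotate (m + 1) ^ (s / m !))⁻¹

/-- The positions swapped by `unrolledWalk`. -/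
def unrolledLabel (t : ℕ → Fin (m + 1)) (s : ℕ) : Fin (m + 1) :=
  (finRotate (m + 1) ^ (s / m !)) (t (s % m !))

theorem div_factorial_lt {s : ℕ} (hs : s < (m + 1)!) : s / m ! < m + 1 :=
  Nat.div_lt_of_lt_mul (by rwa [mul_comm, ← Nat.factorial_succ])

namespace IsFundamentalWalk

variable {τ : Perm (Fin (m + 1))} {g : ℕ → Perm (Fin (m + 1))} {t : ℕ → Fin (m + 1)}

theorem unrolledWalk_mul_add (hg : IsFundamentalWalk τ g t) (q : ℕ) {r : ℕ} (hr : r ≤ m !) :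
    unrolledWalk τ g (m ! * q + r) = τ ^ q * g r * (finRotate (m + 1) ^ q)⁻¹ := by
  have hpos := Nat.factorial_pos m
  rcases hr.lt_or_eq with hr | rfl
  · rw [unrolledWalk, Nat.mul_add_div hpos, Nat.div_eq_of_lt hr, add_zero, Nat.mul_add_mod,
      Nat.mod_eq_of_lt hr]
  · rw [unrolledWalk, ← Nat.mul_succ, Nat.mul_div_cancel_left _ hpos, Nat.mul_mod_right, hg.zero,
      hg.factorial, pow_succ, pow_succ]
    group

theorem unrolledWalk_succ (hg : IsFundamentalWalk τ g t) (s : ℕ) :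
    unrolledWalk τ g (s + 1) = unrolledWalk τ g s * cyclicSwap (unrolledLabel t s) := by
  have hr := Nat.mod_lt s (Nat.factorial_pos m)
  have := hg.unrolledWalk_mul_add (s / m !) (Nat.succ_le_of_lt hr)
  rw [Nat.succ_eq_add_one, ← add_assoc, Nat.div_add_mod, hg.succ _ hr] at this
  rw [this, unrolledWalk, unrolledLabel, cyclicSwap_finRotate_pow]
  group

theorem unrolledWalk_factorial (hg : IsFundamentalWalk τ g t) (hτ : τ ^ (m + 1) = 1) :
    unrolledWalk τ g (m + 1)! = unrolledWalk τ g 0 := by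
  have := hg.unrolledWalk_mul_add (m + 1) (Nat.zero_le _)
  rw [add_zero, mul_comm, ← Nat.factorial_succ] at this
  rw [this]
  simp [unrolledWalk, hg.zero, hτ, finRotate_pow_self]

theorem unrolledWalk_apply_eq_last (hg : IsFundamentalWalk τ g t)
    (hτ : τ (Fin.last m) = Fin.last m) (s : ℕ) :
    unrolledWalk τ g s ((finRotate (m + 1) ^ (s / m !)) (Fin.last m)) = Fin.last m := by
  simp [unrolledWalk, hg.apply_last _ (Nat.mod_lt s (Nat.factorial_pos m)),
    Perm.pow_apply_eq_self_of_apply_eq_self hτ]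

theorem injOn_unrolledWalk (hg : IsFundamentalWalk τ g t) (hτ : τ (Fin.last m) = Fin.last m) :
    Set.InjOn (unrolledWalk τ g) (Set.Iio (m + 1)!) := by
  intro s hs s' hs' h
  have hdiv : s / m ! = s' / m ! := by
    refine eq_of_finRotate_pow_apply_eq (div_factorial_lt hs) (div_factorial_lt hs')
      (j := Fin.last m) ((unrolledWalk τ g s).injective ?_)
    rw [hg.unrolledWalk_apply_eq_last hτ, h, hg.unrolledWalk_apply_eq_last hτ]
  have hmod : s % m ! = s' % m ! := by
    rw [unrolledWalk, unrolledWalk, hdiv, mul_left_inj, mul_right_inj] at h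
    exact hg.injOn (Nat.mod_lt s (Nat.factorial_pos m)) (Nat.mod_lt s' (Nat.factorial_pos m)) h
  rw [← Nat.div_add_mod s (m !), hdiv, hmod, Nat.div_add_mod]

theorem bijective_unrolledWalk (hg : IsFundamentalWalk τ g t) (hτ : τ (Fin.last m) = Fin.last m)
    {N : ℕ} (hN : N + 1 = (m + 1)!) :
    Function.Bijective fun s : Fin (N + 1) => unrolledWalk τ g s := by
  rw [Fintype.bijective_iff_injective_and_card, Fintype.card_perm, Fintype.card_fin,
    Fintype.card_fin]
  exact ⟨fun s s' h => Fin.ext (hg.injOn_unrolledWalk hτ (hN ▸ s.isLt) (hN ▸ s'.isLt) h), hN⟩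

theorem unrolledWalk_add_one (hg : IsFundamentalWalk τ g t) (hτ : τ ^ (m + 1) = 1)
    {N : ℕ} (hN : N + 1 = (m + 1)!) (s : Fin (N + 1)) :
    unrolledWalk τ g (s + 1 : Fin (N + 1)) =
      unrolledWalk τ g s * cyclicSwap (unrolledLabel t s) := by
  rw [← hg.unrolledWalk_succ]
  rcases eq_or_ne s (Fin.last N) with rfl | hs
  · simp [hN, hg.unrolledWalk_factorial hτ]
  · rw [Fin.val_add_one_of_lt (Fin.lt_last_iff_ne_last.2 hs)]

end IsFundamentalWalk

theorem card_filter_unrolledLabel_eq (t : ℕ → Fin (m + 1)) {N : ℕ} (hN : N + 1 = (m + 1)!)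
    (i : Fin (m + 1)) :
    (Finset.univ.filter fun s : Fin (N + 1) => unrolledLabel t s = i).card = m ! := by
  have hpos := Nat.factorial_pos m
  rw [← Finset.card_range (m !)]
  refine Finset.card_bij (fun s _ => s % m !) (fun s _ => ?_) (fun s hs s' hs' h => ?_)
    (fun r hr => ?_)
  · exact Finset.mem_range.2 (Nat.mod_lt s hpos)
  · rw [Finset.mem_filter_univ, unrolledLabel] at hs hs'
    have hdiv : s / m ! = s' / m ! :=
      eq_of_finRotate_pow_apply_eq (div_factorial_lt (hN ▸ s.isLt))
        (div_factorial_lt (hN ▸ s'.isLt)) (hs.trans (h ▸ hs').symm)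
    ext
    rw [← Nat.div_add_mod s (m !), hdiv, h, Nat.div_add_mod]
  · obtain ⟨q, hq, hqi⟩ := exists_finRotate_pow_apply_eq (t r) i
    rw [Finset.mem_range] at hr
    have hlt : m ! * q + r < N + 1 := by
      rw [hN, Nat.factorial_succ]
      nlinarith
    have hmod : (m ! * q + r) % m ! = r := by rw [Nat.mul_add_mod, Nat.mod_eq_of_lt hr]
    refine ⟨⟨m ! * q + r, hlt⟩, ?_, hmod⟩
    rw [Finset.mem_filter_univ, unrolledLabel, Nat.mul_add_div hpos, Nat.div_eq_of_lt hr,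
      add_zero, hmod, hqi]

theorem swap_last_zero_mul_extendLast_finRotate (k : ℕ) :
    swap (Fin.last (k + 1)) 0 * extendLast (k + 1) (finRotate (k + 1)) = finRotate (k + 2) := by
  ext1 j
  cases j using Fin.lastCases with
  | last => simp
  | cast j =>
    cases j using Fin.lastCases with
    | last => simp
    | cast j =>
      rw [Perm.mul_apply, extendLast_castSucc, swap_apply_of_ne_of_ne] <;>
        simp [Fin.ext_iff, j.isLt.ne]

theorem extendLast_mul_cyclicSwap_last {k : ℕ} (τ : Perm (Fin (k + 1))) :
    extendLast (k + 1) (τ * (finRotate (k + 1))⁻¹) * cyclicSwap (Fin.last (k + 1)) =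
      extendLast (k + 1) τ * (finRotate (k + 2))⁻¹ := by
  rw [← swap_last_zero_mul_extendLast_finRotate, cyclicSwap, finRotate_last, mul_inv_rev,
    swap_inv, map_mul, map_inv, mul_assoc]

theorem extendLast_adjacentSwap_eq_cyclicSwap {k : ℕ} (i : Fin k) :
    extendLast (k + 1) (adjacentSwap i) = cyclicSwap i.castSucc.castSucc := by
  rw [extendLast_adjacentSwap, adjacentSwap, cyclicSwap, finRotate_apply,
    Fin.coeSucc_eq_succ]

theorem exists_isFundamentalWalk {k : ℕ} {τ : Perm (Fin (k + 1))}
    (h : HasSpanningPath (bubbleSortGraph k) Set.univ 1 (τ * (finRotate (k + 1))⁻¹)) :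
    ∃ g t, IsFundamentalWalk (extendLast (k + 1) τ) g t := by
  obtain ⟨p, hp, hsupport⟩ := h
  have hlength : p.length + 1 = (k + 1)! := by
    have := hp.isHamiltonian_of_mem fun v => hsupport.ge (Set.mem_univ v)
    rw [← p.length_support, this.length_support, Fintype.card_perm, Fintype.card_fin]
  let g := Function.update (fun r => extendLast (k + 1) (p.getVert r)) (k + 1)!
    (extendLast (k + 1) τ * (finRotate (k + 2))⁻¹)
  have hg {r : ℕ} (hr : r < (k + 1)!) : g r = extendLast (k + 1) (p.getVert r) :=
    Function.update_of_ne hr.ne _ _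
  have hstep (r : ℕ) : ∃ i, r < (k + 1)! → g (r + 1) = g r * cyclicSwap i := by
    rcases lt_trichotomy (r + 1) (k + 1)! with hr | hr | hr
    · obtain ⟨i, hi⟩ := bubbleSortGraph_adj.1
        (p.adj_getVert_succ (Nat.lt_of_succ_lt_succ (hlength ▸ hr)))
      refine ⟨i.castSucc.castSucc, fun hr' => ?_⟩
      rw [hg hr, hg hr', hi, map_mul, extendLast_adjacentSwap_eq_cyclicSwap]
    · refine ⟨Fin.last (k + 1), fun hr' => ?_⟩
      have hr_length : r = p.length := Nat.succ_injective (hr.trans hlength.symm)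
      rw [hg hr', hr_length, p.getVert_length, extendLast_mul_cyclicSwap_last, hlength]
      exact Function.update_self _ _ _
    · exact ⟨0, fun hr' => absurd hr' (Nat.lt_succ_iff.1 hr).not_gt⟩
  choose t ht using hstep
  refine ⟨g, t, ?_, Function.update_self _ _ _, ht, fun r hr => ?_, fun r hr r' hr' h => ?_⟩
  · rw [hg (Nat.factorial_pos _), p.getVert_zero, map_one]
  · rw [hg hr, extendLast_last]
  · rw [hg hr, hg hr'] at h
    rw [Set.mem_Iio, ← hlength, Nat.lt_succ_iff] at hr hr'
    exact hp.getVert_injOn hr hr' (extendLast_injective _ h)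

end Lift

/-- For every even `n ≥ 2` there is a balanced cyclic Gray code for `S_n`
under cyclically adjacent position-swaps: a cyclic listing `π : Fin (N+1) → Perm (Fin n)`
of all `n!` permutations (each exactly once, so `N + 1 = n!` and `π` is bijective),
where step `s` swaps the cyclically adjacent positions `t s` and `t s + 1 (mod n)`
(i.e. `π (s+1) = π s * swap (t s) (finRotate n (t s))`), and each of the `n` cyclically
adjacent position-swaps is used exactly `(n-1)!` times around the cycle. -/
theorem balanced_gray_code_cyclically_adjacent (n : ℕ) (hn : 2 ≤ n) (hne : Even n) :
    ∃ (N : ℕ), N + 1 = Nat.factorial n ∧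
    ∃ (π : Fin (N + 1) → Equiv.Perm (Fin n)) (t : Fin (N + 1) → Fin n),
      Function.Bijective π ∧
      (∀ s : Fin (N + 1), π (s + 1) = π s * Equiv.swap (t s) (finRotate n (t s))) ∧
      (∀ i : Fin n,
        (Finset.univ.filter (fun s : Fin (N + 1) => t s = i)).card
          = Nat.factorial (n - 1)) := by
  obtain ⟨k, rfl⟩ := Nat.exists_eq_add_of_le' hn
  have hk : Even k := (Nat.even_add.1 hne).2 even_two
  obtain ⟨τ, hτ, hpath⟩ := exists_hasSpanningPath_to_inv_finRotate hk
  obtain ⟨g, t, hg⟩ := exists_isFundamentalWalk hpath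
  have hτ_pow : τ ^ (k + 2) = 1 :=
    orderOf_dvd_iff_pow_eq_one.1 ((orderOf_dvd_of_pow_eq_one hτ).trans hne.two_dvd)
  obtain ⟨N, hN⟩ := Nat.exists_eq_add_one_of_ne_zero (k + 2).factorial_ne_zero
  exact ⟨N, hN.symm, fun s => unrolledWalk (extendLast (k + 1) τ) g s,
    fun s => unrolledLabel t s, hg.bijective_unrolledWalk (extendLast_last τ) hN.symm,
    hg.unrolledWalk_add_one (by rw [← map_pow, hτ_pow, map_one]) hN.symm,
    card_filter_unrolledLabel_eq t hN.symm⟩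
end

section
/- For every n ≥ 5, there exists a 2-rainbow cycle in the permutahedron P^adj_n: a cyclically ordered list of pairwise distinct permutations of [n] in which any two cyclically consecutive permutations differ by an adjacent position-swap, and each of the n−1 adjacent position-swaps (i, i+1), i ∈ [n−1], is used exactly 2 times around the cycle. -/
/-!
Closing a path from `1` to the transposition `s₀ = (0 1)` by one more `s₀` gives a cycle, so it is
enough to find in each symmetric group a path from `1` to `s₀` that visits no permutation twice and
uses `s₀` once and every other adjacent swap twice. For five points such a path is found by hand.
If `w` is such a path on the first `n` points and `z` is the adjacent swap that moves the new
point, then `z w z` is such a path on `n + 1` points: it ends at `z s₀ z = s₀` because `z` and `s₀`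
commute, and all of its interior vertices move the new point whereas `1` and `s₀` do not.
-/

open Equiv Finset

section PrefixProds

variable {M N G : Type*} [Monoid M] [Monoid N] [Group G]

/-- The vertices visited by the walk in the Cayley graph that starts at `1` and multiplies on the
right by the letters of the word one after the other. -/
def prefixProds (w : List M) : List M := w.inits.map List.prod

theorem prefixProds_cons (a : M) (w : List M) :
    prefixProds (a :: w) = 1 :: (prefixProds w).map (a * ·) := by
  simp [prefixProds, Function.comp_def]

theorem prefixProds_concat (w : List M) (a : M) :
    prefixProds (w ++ [a]) = prefixProds w ++ [w.prod * a] := by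
  simp [prefixProds]

theorem prefixProds_map (φ : M →* N) (w : List M) :
    prefixProds (w.map φ) = (prefixProds w).map φ := by
  simp [prefixProds, List.map_inits, Function.comp_def, map_list_prod]

theorem length_prefixProds (w : List M) : (prefixProds w).length = w.length + 1 := by
  simp [prefixProds]

theorem getElem_prefixProds (w : List M) (i : ℕ) (hi : i < (prefixProds w).length) :
    (prefixProds w)[i] = (w.take i).prod := by
  simp [prefixProds]

theorem mem_of_mem_prefixProds {H : Submonoid M} {w : List M} (hw : ∀ a ∈ w, a ∈ H) {x : M}
    (hx : x ∈ prefixProds w) : x ∈ H := by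
  obtain ⟨u, hu, rfl⟩ := List.mem_map.mp hx
  exact H.list_prod_mem fun a ha => hw a (((List.mem_inits u w).mp hu).subset ha)

theorem nodup_prefixProds_cons_concat {H : Subgroup G} {w : List G} {a b : G}
    (hw : (prefixProds w).Nodup) (hwH : ∀ x ∈ w, x ∈ H) (ha : a ∉ H)
    (hend : a * w.prod * b ∈ H) (hend_ne : a * w.prod * b ≠ 1) :
    (prefixProds (a :: (w ++ [b]))).Nodup := by
  have interior_notMem : ∀ x ∈ (prefixProds w).map (a * ·), x ∉ H := by
    intro x hx
    obtain ⟨y, hy, rfl⟩ := List.mem_map.mp hx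
    have hyH : y ∈ H := mem_of_mem_prefixProds (H := H.toSubmonoid) hwH hy
    exact fun hay => ha ((H.mul_mem_cancel_right hyH).mp hay)
  have interior_nodup : ((prefixProds w).map (a * ·)).Nodup := hw.map (mul_right_injective a)
  rw [prefixProds_cons, prefixProds_concat, List.map_append, List.map_singleton, ← mul_assoc,
    List.nodup_cons, List.mem_append, List.mem_singleton, ← List.concat_eq_append,
    List.nodup_concat]
  refine ⟨?_, fun h => interior_notMem _ h hend, interior_nodup⟩
  rintro (h | h)
  · exact interior_notMem 1 h H.one_mem
  · exact hend_ne h.symm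

theorem injective_prod_take_of_nodup_prefixProds {w : List M} (hw : (prefixProds w).Nodup) :
    Function.Injective fun s : Fin (w.length + 1) => (w.take s).prod := by
  intro s t hst
  have hs : s < (prefixProds w).length := by rw [length_prefixProds]; exact s.isLt
  have ht : t < (prefixProds w).length := by rw [length_prefixProds]; exact t.isLt
  refine Fin.ext (hw.getElem_inj_iff (hi := hs) (hj := ht) |>.mp ?_)
  simpa only [getElem_prefixProds] using hst

theorem prod_take_val_add_one_of_prod_eq_one {w : List M} {k : ℕ} (hlen : w.length = k + 1)
    (hw : w.prod = 1) (s : Fin (k + 1)) :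
    (w.take (s + 1 : Fin (k + 1))).prod = (w.take s).prod * w[s] := by
  rw [Fin.getElem_fin, ← List.prod_take_succ]
  induction s using Fin.lastCases with
  | last => simp [← hlen, hw]
  | cast s => simp

end PrefixProds

theorem card_filter_getElem_eq_count {α : Type*} [DecidableEq α] {l : List α} {k : ℕ}
    (hlen : l.length = k) (a : α) : #{s : Fin k | l[s] = a} = l.count a := by
  subst hlen
  exact Fin.card_filter_univ_eq_vector_get_eq_count a ⟨l, rfl⟩

theorem viaEmbedding_swap {α β : Type*} [DecidableEq α] [DecidableEq β] (ι : α ↪ β) (a b : α) :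
    (swap a b).viaEmbedding ι = swap (ι a) (ι b) := by
  ext y
  by_cases hy : y ∈ Set.range ι
  · obtain ⟨x, rfl⟩ := hy
    rw [Perm.viaEmbedding_apply, ι.injective.map_swap]
  · rw [Perm.viaEmbedding_apply_of_notMem _ _ _ hy, swap_apply_of_ne_of_ne] <;>
      exact fun h => hy ⟨_, h.symm⟩

section AdjSwap

variable {m : ℕ}

/-- The `i`-th adjacent swap of `m + 1` positions, where positions are counted from `0`. -/
def adjSwap (i : Fin m) : Perm (Fin (m + 1)) := swap i.castSucc i.succ

theorem adjSwap_injective : Function.Injective (adjSwap : Fin m → Perm (Fin (m + 1))) := by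
  intro i j hij
  have hj : adjSwap j i.castSucc = i.succ := by rw [← hij, adjSwap, swap_apply_left]
  rw [adjSwap, swap_apply_def] at hj
  split_ifs at hj with h₁ h₂
  · exact Fin.castSucc_injective _ h₁
  · simp only [Fin.ext_iff, Fin.val_castSucc, Fin.val_succ] at h₂ hj
    omega
  · exact absurd hj Fin.castSucc_lt_succ.ne

theorem adjSwap_mul_self (i : Fin m) : adjSwap i * adjSwap i = 1 := swap_mul_self _ _

theorem adjSwap_ne_one (i : Fin m) : adjSwap i ≠ 1 := by
  simpa only [adjSwap, ne_eq, swap_eq_one_iff] using Fin.castSucc_lt_succ.ne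

theorem viaEmbeddingHom_adjSwap (i : Fin m) :
    Perm.viaEmbeddingHom Fin.castSuccEmb (adjSwap i) = adjSwap i.castSucc :=
  viaEmbedding_swap _ _ _

theorem map_viaEmbeddingHom_adjSwap (w : List (Fin m)) :
    (w.map adjSwap).map (Perm.viaEmbeddingHom Fin.castSuccEmb) =
      (w.map Fin.castSucc).map adjSwap := by
  simp [Function.comp_def, viaEmbeddingHom_adjSwap]

theorem adjSwap_castSucc_mem_stabilizer_last (i : Fin m) :
    adjSwap i.castSucc ∈ MulAction.stabilizer (Perm (Fin (m + 2))) (Fin.last (m + 1)) := by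
  rw [MulAction.mem_stabilizer_iff, Perm.smul_def, adjSwap, Fin.succ_castSucc]
  exact swap_apply_of_ne_of_ne (Fin.castSucc_ne_last _).symm (Fin.castSucc_ne_last _).symm

theorem adjSwap_last_notMem_stabilizer_last :
    adjSwap (Fin.last m) ∉ MulAction.stabilizer (Perm (Fin (m + 2))) (Fin.last (m + 1)) := by
  rw [MulAction.mem_stabilizer_iff, Perm.smul_def, adjSwap, Fin.succ_last, swap_apply_right]
  exact Fin.castSucc_ne_last _

theorem commute_adjSwap {i j : Fin m} (hij : (i : ℕ) + 1 < j) :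
    Commute (adjSwap i) (adjSwap j) := by
  have endpoints_nodup : [i.castSucc, i.succ, j.castSucc, j.succ].Nodup := by grind
  exact (Perm.disjoint_swap_swap endpoints_nodup).commute

end AdjSwap

/-- A word in the adjacent swaps of `m + 2` positions that becomes a 2-rainbow cycle when the letter
`0` is appended to it: it describes a path from `1` to `adjSwap 0` without repeated vertices which
uses `adjSwap 0` once and every other adjacent swap twice. -/
structure IsOpenRainbowWord {m : ℕ} (w : List (Fin (m + 1))) : Prop where
  nodup : (prefixProds (w.map adjSwap)).Nodup
  prod_eq : (w.map adjSwap).prod = adjSwap 0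
  count_eq (i : Fin (m + 1)) : (w ++ [0]).count i = 2

theorem isOpenRainbowWord_five_points :
    IsOpenRainbowWord ([1, 3, 1, 2, 0, 2, 3] : List (Fin 4)) where
  nodup := by decide
  prod_eq := by decide
  count_eq := by decide

/-- The vertices of the cycle described by `w ++ [0]`. -/
def cycleVertex {m : ℕ} (w : List (Fin (m + 1))) (s : Fin (w.length + 1)) : Perm (Fin (m + 2)) :=
  ((w.map adjSwap).take s).prod

/-- The letter of `w ++ [0]` by which the cycle leaves its `s`-th vertex. -/
def cycleLetter {m : ℕ} (w : List (Fin (m + 1))) (s : Fin (w.length + 1)) : Fin (m + 1) :=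
  (w ++ [0])[s]

namespace IsOpenRainbowWord

variable {m : ℕ} {w : List (Fin (m + 1))}

theorem prod_map_castSucc (hw : IsOpenRainbowWord w) :
    ((w.map Fin.castSucc).map adjSwap).prod = adjSwap 0 := by
  rw [← map_viaEmbeddingHom_adjSwap, ← map_list_prod, hw.prod_eq, viaEmbeddingHom_adjSwap,
    Fin.castSucc_zero]

theorem nodup_map_castSucc (hw : IsOpenRainbowWord w) :
    (prefixProds ((w.map Fin.castSucc).map adjSwap)).Nodup := by
  rw [← map_viaEmbeddingHom_adjSwap, prefixProds_map]
  exact hw.nodup.map (Perm.viaEmbeddingHom_injective _)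

theorem conj_prod_map_castSucc (hw : IsOpenRainbowWord w) (hm : 1 ≤ m) :
    adjSwap (Fin.last (m + 1)) * ((w.map Fin.castSucc).map adjSwap).prod *
      adjSwap (Fin.last (m + 1)) = adjSwap 0 := by
  have hcomm : Commute (adjSwap 0) (adjSwap (Fin.last (m + 1))) :=
    commute_adjSwap (by rw [Fin.val_zero, Fin.val_last]; omega)
  rw [hw.prod_map_castSucc, ← hcomm.eq, mul_assoc, adjSwap_mul_self, mul_one]

theorem last_cons_concat_last (hw : IsOpenRainbowWord w) (hm : 1 ≤ m) :
    IsOpenRainbowWord (Fin.last (m + 1) :: (w.map Fin.castSucc ++ [Fin.last (m + 1)])) where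
  nodup := by
    have mem_stabilizer : ∀ g ∈ (w.map Fin.castSucc).map adjSwap,
        g ∈ MulAction.stabilizer (Perm (Fin (m + 3))) (Fin.last (m + 2)) := by
      simp only [List.forall_mem_map]
      exact fun i _ => adjSwap_castSucc_mem_stabilizer_last i
    have conj_eq := hw.conj_prod_map_castSucc hm
    simp only [List.map_cons, List.map_append, List.map_nil]
    exact nodup_prefixProds_cons_concat hw.nodup_map_castSucc mem_stabilizer
      adjSwap_last_notMem_stabilizer_last
      (conj_eq ▸ adjSwap_castSucc_mem_stabilizer_last 0) (conj_eq ▸ adjSwap_ne_one 0)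
  prod_eq := by simpa [mul_assoc] using hw.conj_prod_map_castSucc hm
  count_eq i := by
    induction i using Fin.lastCases with
    | last =>
      have hlast : Fin.last (m + 1) ∉ w.map Fin.castSucc := by simp
      simp [List.count_eq_zero.mpr hlast]
    | cast i =>
      have hi := hw.count_eq i
      rw [← List.count_map_of_injective _ _ (Fin.castSucc_injective _)] at hi
      simpa [List.count_cons, (Fin.castSucc_ne_last i).symm] using hi

theorem cycleVertex_injective (hw : IsOpenRainbowWord w) : Function.Injective (cycleVertex w) := by
  have := injective_prod_take_of_nodup_prefixProds hw.nodup
  rwa [List.length_map] at this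

theorem cycleVertex_add_one (hw : IsOpenRainbowWord w) (s : Fin (w.length + 1)) :
    cycleVertex w (s + 1) = cycleVertex w s * adjSwap (cycleLetter w s) := by
  have vertex_eq (t : Fin (w.length + 1)) :
      (((w ++ [0]).map adjSwap).take t).prod = cycleVertex w t := by
    rw [cycleVertex, List.map_append, List.take_append_of_le_length (by simp [Fin.is_le])]
  have closed : ((w ++ [0]).map adjSwap).prod = 1 := by
    simp [hw.prod_eq, adjSwap_mul_self]
  rw [← vertex_eq, ← vertex_eq, prod_take_val_add_one_of_prod_eq_one (by simp) closed]
  simp only [cycleLetter, Fin.getElem_fin, List.getElem_map]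

theorem cycleVertex_add_one_eq_iff (hw : IsOpenRainbowWord w) (s : Fin (w.length + 1))
    (i : Fin (m + 1)) :
    cycleVertex w (s + 1) = cycleVertex w s * adjSwap i ↔ cycleLetter w s = i := by
  rw [hw.cycleVertex_add_one, mul_right_inj, adjSwap_injective.eq_iff]

theorem card_cycleLetter_eq (hw : IsOpenRainbowWord w) (i : Fin (m + 1)) :
    #{s | cycleLetter w s = i} = 2 := by
  simp only [cycleLetter]
  exact (card_filter_getElem_eq_count (by simp) i).trans (hw.count_eq i)

end IsOpenRainbowWord

theorem exists_isOpenRainbowWord {m : ℕ} (hm : 3 ≤ m) :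
    ∃ w : List (Fin (m + 1)), IsOpenRainbowWord w := by
  induction m, hm using Nat.le_induction with
  | base => exact ⟨_, isOpenRainbowWord_five_points⟩
  | succ m hm ih =>
    obtain ⟨w, hw⟩ := ih
    exact ⟨_, hw.last_cons_concat_last (by omega)⟩

/-- For every `n ≥ 5` there is a 2-rainbow cycle in the permutahedron
`P^adj_n`: a cyclically indexed family `π : Fin (N+1) → Perm (Fin n)` of pairwise
distinct permutations in which any two cyclically consecutive permutations differ by
an adjacent position-swap (`π (s+1) = π s * swap i (i+1)`), and each of the `n−1`
adjacent position-swaps is used exactly `2` times around the cycle. -/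
theorem two_rainbow_cycle_permutahedron (n : ℕ) (hn : 5 ≤ n) :
    ∃ (N : ℕ) (π : Fin (N + 1) → Equiv.Perm (Fin n)),
      Function.Injective π ∧
      (∀ s : Fin (N + 1), ∃ i : ℕ, ∃ h : i + 1 < n,
        π (s + 1) = π s * Equiv.swap ⟨i, by omega⟩ ⟨i + 1, h⟩) ∧
      (∀ i : ℕ, ∀ h : i + 1 < n,
        (Finset.univ.filter (fun s : Fin (N + 1) =>
          π (s + 1) = π s * Equiv.swap ⟨i, by omega⟩ ⟨i + 1, h⟩)).card = 2) := by
  obtain ⟨m, rfl⟩ : ∃ m, n = m + 2 := ⟨n - 2, by omega⟩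
  obtain ⟨w, hw⟩ := exists_isOpenRainbowWord (m := m) (by omega)
  have swap_eq (i : ℕ) (h : i + 1 < m + 2) :
      swap (⟨i, by omega⟩ : Fin (m + 2)) ⟨i + 1, h⟩ = adjSwap ⟨i, by omega⟩ := rfl
  refine ⟨w.length, cycleVertex w, hw.cycleVertex_injective, fun s => ?_, fun i h => ?_⟩
  · exact ⟨cycleLetter w s, by omega, hw.cycleVertex_add_one s⟩
  · simp only [swap_eq, hw.cycleVertex_add_one_eq_iff]
    exact hw.card_cycleLetter_eq ⟨i, by omega⟩
end

section
/- Let n ≥ 2 be even. Suppose there exists an almost balanced Gray code for S_n from the word 12⋯n to the word 23⋯n1, i.e., a Gray code in which every wide transposition on [n] is applied exactly 2(n−2)! times. Then there exists a balanced cyclic Gray code for S_{n+1} under all transpositions from 12⋯n(n+1) to 12⋯(n+1)n whose closing transposition is (n, n+1); in particular each of the (n+1)n/2 transpositions on [n+1] is applied exactly 2(n−1)! times along the cycle, counting the closing transposition. -/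
/-!
Let `τ` be the translation by `1` on `ℤ/(n+1)`, and let `σ ↦ σ⁺` extend permutations of `[n]` by
fixing the new last value. Numbering values from `0`, one has `τ = (0 n) ∘ (finRotate n)⁺`, so the
given path, extended by `⁺`, is left for its translate by `τ` through a single transposition. Hence
its translates by `τ⁰, τ¹, …, τⁿ` concatenate to a cyclic Gray code.

The steps of the `b`-th block are the conjugates by `τᵇ` of those of the first block, so the number
of uses of `(i, j)` along the cycle is the number of uses in the first block of all translates of
`(i, j)`, which depends only on `d = j - i`. If `d ≠ ±1`, these translates are `n - 1` wide
transpositions on `[n]`, used `2(n-2)!` times each, and two that move the last value and are not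
used at all, which gives `2(n-1)!` uses. The differences `1` and `-1` have equal counts, which are
then determined by the total number of steps.
-/

namespace PermGrayCode

open Equiv Finset
open scoped Nat

section CyclicStep

variable {G : Type*} [Group G]

/-- The successive quotients of a cyclic sequence (`s + 1` wraps around). When `x` lists
permutations, this is the permutation of the values that is applied in passing from `x s` to its
successor. -/
def cyclicStep {k : ℕ} [NeZero k] (x : Fin k → G) (s : Fin k) : G :=
  x (s + 1) * (x s)⁻¹

theorem cyclicStep_eq_iff {k : ℕ} [NeZero k] {x : Fin k → G} {s : Fin k} {g : G} :
    cyclicStep x s = g ↔ x (s + 1) = g * x s :=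
  mul_inv_eq_iff_eq_mul

variable {m N : ℕ}

theorem modNat_add_one (s : Fin ((m + 1) * (N + 1))) : (s + 1).modNat = s.modNat + 1 := by
  ext
  simp [Fin.val_add]

theorem divNat_add_one (s : Fin ((m + 1) * (N + 1))) :
    (s + 1).divNat = s.divNat + if s.modNat = Fin.last N then 1 else 0 := by
  have hdvd : N + 1 ∣ (s : ℕ) + 1 ↔ s.modNat = Fin.last N := by
    rw [Fin.ext_iff, Fin.coe_modNat, Fin.val_last]
    have hlt : (s : ℕ) % (N + 1) < N + 1 := s.modNat.is_lt
    conv_lhs => rw [← Nat.div_add_mod s (N + 1), add_assoc, Nat.dvd_add_right (dvd_mul_right _ _)]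
    exact ⟨fun h => by have := Nat.le_of_dvd (Nat.succ_pos _) h; omega, fun h => by rw [h]⟩
  ext
  have hval : ((s + 1 : Fin _) : ℕ) = ((s : ℕ) + 1) % ((m + 1) * (N + 1)) := by
    simp [Fin.val_add]
  rw [Fin.coe_divNat, hval, Nat.mod_mul_left_div_self, Nat.succ_div, if_congr hdvd rfl rfl,
    Fin.val_add, Fin.coe_divNat]
  split_ifs <;> simp

-- `Fin ((m + 1) * N + m + 1)` is `Fin ((m + 1) * (N + 1))` by definition of multiplication.
theorem divNat_last :
    Fin.divNat (m := m + 1) (n := N + 1) (Fin.last ((m + 1) * N + m)) = Fin.last m := by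
  ext
  rw [Fin.coe_divNat, Fin.val_last, Fin.val_last, show (m + 1) * N + m = N + (N + 1) * m by ring,
    Nat.add_mul_div_left _ _ N.succ_pos, Nat.div_eq_of_lt N.lt_succ_self, zero_add]

theorem modNat_last :
    Fin.modNat (m := m + 1) (n := N + 1) (Fin.last ((m + 1) * N + m)) = Fin.last N := by
  ext
  rw [Fin.coe_modNat, Fin.val_last, Fin.val_last, show (m + 1) * N + m = N + (N + 1) * m by ring,
    Nat.add_mul_mod_self_left, Nat.mod_eq_of_lt N.lt_succ_self]

/-- The left translates `t 0 * y, t 1 * y, …, t m * y` of one sequence `y`, written one after the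
other. -/
def blockConcat (t : Fin (m + 1) → G) (y : Fin (N + 1) → G) (s : Fin ((m + 1) * (N + 1))) : G :=
  t s.divNat * y s.modNat

/-- The steps along `y`, the last of which leads to `a * y 0` instead of back to `y 0`: the steps
of a block of `blockConcat t y`, up to conjugation, when `a` carries each block to the next. -/
def blockStep (a : G) (y : Fin (N + 1) → G) (r : Fin (N + 1)) : G :=
  (if r = Fin.last N then a else 1) * cyclicStep y r

theorem cyclicStep_blockConcat {t : Fin (m + 1) → G} {a : G} (ht : ∀ b, t (b + 1) = t b * a)
    (y : Fin (N + 1) → G) (s : Fin ((m + 1) * (N + 1))) :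
    cyclicStep (blockConcat t y) s = t s.divNat * blockStep a y s.modNat * (t s.divNat)⁻¹ := by
  rw [cyclicStep, blockConcat, blockConcat, modNat_add_one, divNat_add_one, blockStep, cyclicStep]
  split_ifs <;> simp [ht, mul_assoc]

end CyclicStep

section SwapCount

variable {ι α : Type*} [DecidableEq α]

theorem isSwap_conj {f : Perm α} (hf : f.IsSwap) (g : Perm α) : (g * f * g⁻¹).IsSwap := by
  obtain ⟨i, j, hij, rfl⟩ := hf
  exact ⟨g i, g j, g.injective.ne hij, (swap_apply_apply g i j).symm⟩

variable [Fintype ι] [Fintype α]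

/-- The number of indices at which the family `θ` takes the transposition `(i, j)` as its value. -/
def swapCount (θ : ι → Perm α) (i j : α) : ℕ :=
  #{s | θ s = swap i j}

theorem swapCount_comm (θ : ι → Perm α) (i j : α) : swapCount θ i j = swapCount θ j i := by
  rw [swapCount, swapCount, swap_comm]

theorem eq_swap_iff_mem_support {f : Perm α} (hf : f.IsSwap) {x y : α} (hxy : x ≠ y) :
    f = swap x y ↔ x ∈ f.support ∧ y ∈ f.support := by
  constructor
  · rintro rfl
    simp [Perm.support_swap hxy]
  · obtain ⟨i, j, hij, rfl⟩ := hf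
    rw [Perm.support_swap hij]
    simp only [mem_insert, mem_singleton]
    rintro ⟨rfl | rfl, rfl | rfl⟩
    exacts [absurd rfl hxy, rfl, swap_comm _ _, absurd rfl hxy]

theorem card_offDiag_filter_eq_swap {f : Perm α} (hf : f.IsSwap) :
    #{q ∈ (univ : Finset α).offDiag | f = swap q.1 q.2} = 2 := by
  have hpairs : {q ∈ (univ : Finset α).offDiag | f = swap q.1 q.2} = f.support.offDiag := by
    ext q
    simp only [mem_filter, mem_offDiag, mem_univ, true_and]
    have := eq_swap_iff_mem_support hf (x := q.1) (y := q.2)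
    tauto
  rw [hpairs, offDiag_card, Perm.card_support_eq_two.2 hf]

theorem sum_offDiag_swapCount {θ : ι → Perm α} (hθ : ∀ s, (θ s).IsSwap) :
    ∑ q ∈ (univ : Finset α).offDiag, swapCount θ q.1 q.2 = 2 * Fintype.card ι := by
  calc ∑ q ∈ (univ : Finset α).offDiag, swapCount θ q.1 q.2
      = ∑ s, #{q ∈ (univ : Finset α).offDiag | θ s = swap q.1 q.2} := by
        simp only [swapCount, card_filter]
        exact sum_comm
    _ = ∑ _s : ι, 2 := sum_congr rfl fun s _ => card_offDiag_filter_eq_swap (hθ s)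
    _ = 2 * Fintype.card ι := by simp [mul_comm]

end SwapCount

section DifferenceCount

variable {ι A : Type*} [AddCommGroup A] [DecidableEq A]

theorem conj_addLeft_eq_swap_iff (f : Perm A) (b i j : A) :
    Equiv.addLeft b * f * (Equiv.addLeft b)⁻¹ = swap i j ↔ f = swap (i - b) (j - b) := by
  have hconj := swap_apply_apply (Equiv.addLeft b) (i - b) (j - b)
  simp only [Equiv.coe_addLeft, add_sub_cancel] at hconj
  rw [hconj, mul_left_inj, mul_right_inj]

variable [Fintype ι] [Fintype A]

/-- The number of uses in `θ` of the translates `(a, a + d)` of the transposition `(0, d)`. The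
sum is over all `a`, so uses count twice if `2 • d = 0`. -/
def differenceCount (θ : ι → Perm A) (d : A) : ℕ :=
  ∑ a, swapCount θ a (a + d)

theorem differenceCount_neg (θ : ι → Perm A) (d : A) :
    differenceCount θ (-d) = differenceCount θ d := by
  refine Fintype.sum_equiv (Equiv.addRight (-d)) _ _ fun a => ?_
  simp [swapCount_comm θ a]

theorem sum_differenceCount {θ : ι → Perm A} (hθ : ∀ s, (θ s).IsSwap) :
    ∑ d ∈ {0}ᶜ, differenceCount θ d = 2 * Fintype.card ι := by
  simp only [differenceCount]
  rw [← sum_offDiag_swapCount hθ, ← sum_product']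
  refine sum_nbij' (fun p => (p.2, p.2 + p.1)) (fun q => (q.2 - q.1, q.1)) ?_ ?_ ?_ ?_ ?_ <;>
    simp +contextual [sub_eq_zero, eq_comm]

theorem swapCount_conj_addLeft (θ : ι → Perm A) (i j : A) :
    swapCount (fun p : A × ι => Equiv.addLeft p.1 * θ p.2 * (Equiv.addLeft p.1)⁻¹) i j =
      differenceCount θ (j - i) := by
  calc swapCount (fun p : A × ι => Equiv.addLeft p.1 * θ p.2 * (Equiv.addLeft p.1)⁻¹) i j
      = ∑ b, swapCount θ (i - b) (j - b) := by
        simp only [swapCount, conj_addLeft_eq_swap_iff, card_filter, Fintype.sum_prod_type]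
    _ = differenceCount θ (j - i) := by
        refine Fintype.sum_equiv (Equiv.subLeft i) _ _ fun b => ?_
        congr 1
        simp

end DifferenceCount

section WideCount

variable {ι : Type*} [Fintype ι] {n k : ℕ} {θ : ι → Perm (Fin (n + 1))}

theorem last_eq_neg_one : Fin.last n = -1 :=
  eq_neg_of_add_eq_zero_left (Fin.last_add_one n)

theorem castSucc_add_one_eq_castSucc {i j : Fin n} (h : (i : ℕ) + 1 = j) :
    i.castSucc + 1 = j.castSucc := by
  rw [Fin.coeSucc_eq_succ]
  exact Fin.ext h

theorem differenceCount_eq_mul_of_wide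
    (hlast : ∀ j, j ≠ 0 → j ≠ Fin.last n → swapCount θ (Fin.last n) j = 0)
    (hwide : ∀ i j : Fin n, i ≠ j → ¬((i : ℕ) + 1 = j ∨ (j : ℕ) + 1 = i) →
      swapCount θ i.castSucc j.castSucc = k)
    {d : Fin (n + 1)} (h0 : d ≠ 0) (h1 : d ≠ 1) (h1' : d ≠ -1) :
    differenceCount θ d = (n - 1) * k := by
  have hunused : ∀ a ∈ ({Fin.last n, Fin.last n - d} : Finset _), swapCount θ a (a + d) = 0 := by
    simp only [mem_insert, mem_singleton]
    rintro a (rfl | rfl)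
    · refine hlast _ (fun h => h1 ?_) (by simpa using h0)
      exact add_left_cancel (h.trans (Fin.last_add_one n).symm)
    · rw [sub_add_cancel, swapCount_comm]
      refine hlast _ (fun h => h1' ?_) (by simpa using h0)
      exact (sub_eq_zero.1 h).symm.trans last_eq_neg_one
  have hused : ∀ a ∈ ({Fin.last n, Fin.last n - d} : Finset _)ᶜ, swapCount θ a (a + d) = k := by
    intro a ha
    simp only [mem_compl, mem_insert, mem_singleton, not_or, eq_sub_iff_add_eq] at ha
    obtain ⟨i, rfl⟩ := Fin.exists_castSucc_eq.2 ha.1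
    obtain ⟨j, hj⟩ := Fin.exists_castSucc_eq.2 ha.2
    rw [← hj]
    refine hwide i j ?_ ?_
    · rintro rfl
      exact h0 (by simpa using hj)
    · rintro (h | h)
      · rw [← castSucc_add_one_eq_castSucc h, add_right_inj] at hj
        exact h1 hj.symm
      · rw [← castSucc_add_one_eq_castSucc h, add_assoc, left_eq_add] at hj
        exact h1' (eq_neg_of_add_eq_zero_right hj)
  have hne : Fin.last n ≠ Fin.last n - d := fun h => h0 (sub_eq_self.1 h.symm)
  rw [differenceCount, ← sum_add_sum_compl {Fin.last n, Fin.last n - d}, sum_eq_zero hunused,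
    sum_const_nat hused, card_compl, card_pair hne, Fintype.card_fin, zero_add]
  rfl

theorem two_mul_differenceCount_one_add (hn : 2 ≤ n) (hθ : ∀ s, (θ s).IsSwap)
    (hwide : ∀ d : Fin (n + 1), d ≠ 0 → d ≠ 1 → d ≠ -1 → differenceCount θ d = k) :
    2 * differenceCount θ 1 + (n - 2) * k = 2 * Fintype.card ι := by
  have hone_neg : (1 : Fin (n + 1)) ≠ -1 := by
    rw [Fin.ne_iff_vne, Fin.coe_neg_one, Fin.val_one', Nat.mod_eq_of_lt (by omega)]
    omega
  have hsub : ({1, -1} : Finset (Fin (n + 1))) ⊆ {0}ᶜ := by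
    simp [show n ≠ 0 by omega]
  have hrest : ∀ d ∈ ({0}ᶜ \ {1, -1} : Finset (Fin (n + 1))), differenceCount θ d = k := by
    intro d hd
    simp only [mem_sdiff, mem_compl, mem_insert, mem_singleton, not_or] at hd
    exact hwide d hd.1 hd.2.1 hd.2.2
  rw [← sum_differenceCount hθ, ← sum_sdiff hsub, sum_const_nat hrest, sum_pair hone_neg,
    differenceCount_neg, card_sdiff_of_subset hsub, card_pair hone_neg, card_compl, card_singleton,
    Fintype.card_fin, Nat.add_sub_cancel]
  ring

theorem differenceCount_eq_two_mul_factorial (hn : 2 ≤ n) (hcard : Fintype.card ι = n !)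
    (hθ : ∀ s, (θ s).IsSwap)
    (hlast : ∀ j, j ≠ 0 → j ≠ Fin.last n → swapCount θ (Fin.last n) j = 0)
    (hwide : ∀ i j : Fin n, i ≠ j → ¬((i : ℕ) + 1 = j ∨ (j : ℕ) + 1 = i) →
      swapCount θ i.castSucc j.castSucc = 2 * (n - 2)!)
    {d : Fin (n + 1)} (hd : d ≠ 0) : differenceCount θ d = 2 * (n - 1)! := by
  obtain ⟨m, rfl⟩ := Nat.exists_eq_add_of_le' hn
  have hfar : ∀ d : Fin (m + 2 + 1), d ≠ 0 → d ≠ 1 → d ≠ -1 →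
      differenceCount θ d = 2 * (m + 1)! := by
    intro d h0 h1 h1'
    rw [differenceCount_eq_mul_of_wide hlast hwide h0 h1 h1', Nat.factorial_succ]
    simp only [Nat.add_sub_cancel, Nat.add_succ_sub_one]
    ring
  have hnear : differenceCount θ 1 = 2 * (m + 1)! := by
    have htotal := two_mul_differenceCount_one_add hn hθ hfar
    rw [hcard, Nat.factorial_succ (m + 1), Nat.add_sub_cancel] at htotal
    linarith
  by_cases h1 : d = 1
  · exact h1 ▸ hnear
  by_cases h1' : d = -1
  · rw [h1', differenceCount_neg]
    exact hnear
  exact hfar d hd h1 h1'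

end WideCount

section ExtendLast

variable {n : ℕ}

/-- The embedding of `S_n` in `S_{n+1}` as the stabilizer of the new last value. -/
noncomputable def extendLast : Perm (Fin n) →* Perm (Fin (n + 1)) :=
  Perm.viaEmbeddingHom Fin.castSuccEmb

@[simp]
theorem extendLast_castSucc (σ : Perm (Fin n)) (i : Fin n) :
    extendLast σ i.castSucc = (σ i).castSucc :=
  Perm.viaEmbedding_apply σ Fin.castSuccEmb i

@[simp]
theorem extendLast_last (σ : Perm (Fin n)) : extendLast σ (Fin.last n) = Fin.last n :=
  Perm.viaEmbedding_apply_of_notMem σ _ _ (by simp)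

theorem extendLast_injective : Function.Injective (extendLast (n := n)) :=
  Perm.viaEmbeddingHom_injective _

theorem extendLast_swap (i j : Fin n) :
    extendLast (swap i j) = swap i.castSucc j.castSucc := by
  ext x : 1
  induction x using Fin.lastCases with
  | last => simp [swap_apply_of_ne_of_ne, (Fin.castSucc_ne_last _).symm]
  | cast x => rw [extendLast_castSucc, (Fin.castSucc_injective n).swap_apply]

theorem addLeft_one_eq_swap_mul_extendLast_finRotate :
    Equiv.addLeft (1 : Fin (n + 1)) = swap 0 (Fin.last n) * extendLast (finRotate n) := by
  ext x : 1
  induction x using Fin.lastCases with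
  | last => simp [add_comm]
  | cast i =>
    obtain ⟨n, rfl⟩ := Nat.exists_eq_succ_of_ne_zero i.neZero.ne
    have hsucc (j : Fin (n + 1)) : Equiv.addLeft (1 : Fin (n + 2)) j.castSucc = j.succ := by
      simp [add_comm]
    rw [hsucc, Perm.mul_apply, extendLast_castSucc, finRotate_apply]
    induction i using Fin.lastCases with
    | last => simp
    | cast j =>
      rw [Fin.coeSucc_eq_succ, swap_apply_of_ne_of_ne _ (Fin.castSucc_ne_last j.succ),
        Fin.succ_castSucc]
      simp

theorem addLeft_last_mul_extendLast_finRotate (hn : n ≠ 0) :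
    Equiv.addLeft (Fin.last n) * extendLast (finRotate n) =
      swap ⟨n - 1, by omega⟩ (Fin.last n) := by
  have hlast : Fin.last n + Fin.last n = ⟨n - 1, by omega⟩ := by
    ext
    rw [Fin.val_add, Fin.val_last, show n + n = n - 1 + (n + 1) by omega, Nat.add_mod_right,
      Nat.mod_eq_of_lt (by omega)]
  have hinv : (Equiv.addLeft (Fin.last n))⁻¹ = Equiv.addLeft 1 := by
    simp [last_eq_neg_one]
  have hconj := swap_apply_apply (Equiv.addLeft (Fin.last n)) 0 (Fin.last n)
  rw [hinv, addLeft_one_eq_swap_mul_extendLast_finRotate, mul_assoc, swap_mul_self_mul] at hconj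
  simpa [hlast, swap_comm] using hconj.symm

end ExtendLast

section RotationCode

variable {n N : ℕ} (π : Fin (N + 1) → Perm (Fin n))

/-- The translates of the path `π` by `0, 1, …, n` (added to the values, modulo `n + 1`), one after
the other. This is a cyclic Gray code if `π` is a Gray code from `1` to `finRotate n`. -/
noncomputable def rotationCode : Fin ((n + 1) * (N + 1)) → Perm (Fin (n + 1)) :=
  blockConcat Equiv.addLeft (extendLast ∘ π)

/-- The steps of `rotationCode π` inside its first block and from there to the second block; the
steps of the later blocks are the conjugates of these by translations. -/
noncomputable def rotationStep : Fin (N + 1) → Perm (Fin (n + 1)) :=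
  blockStep (Equiv.addLeft 1) (extendLast ∘ π)

theorem cyclicStep_rotationCode (s : Fin ((n + 1) * (N + 1))) :
    cyclicStep (rotationCode π) s =
      Equiv.addLeft s.divNat * rotationStep π s.modNat * (Equiv.addLeft s.divNat)⁻¹ := by
  refine cyclicStep_blockConcat (fun b => ?_) _ s
  ext x : 1
  simp

theorem swapCount_cyclicStep_rotationCode (i j : Fin (n + 1)) :
    swapCount (cyclicStep (rotationCode π)) i j = differenceCount (rotationStep π) (j - i) := by
  rw [← swapCount_conj_addLeft]
  refine card_equiv finProdFinEquiv.symm fun s => ?_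
  simp [cyclicStep_rotationCode]

variable {π}

theorem rotationCode_injective (hπ : Function.Injective π) :
    Function.Injective (rotationCode π) := by
  intro s t h
  simp only [rotationCode, blockConcat, Function.comp_apply] at h
  have hdiv : s.divNat = t.divNat := by
    simpa using congrArg (fun σ => σ (Fin.last n)) h
  rw [hdiv, mul_right_inj] at h
  exact finProdFinEquiv.symm.injective (Prod.ext hdiv (hπ (extendLast_injective h)))

theorem rotationCode_bijective (hπ : Function.Injective π) (hN : N + 1 = n !) :
    Function.Bijective (rotationCode π) := by
  refine (Fintype.bijective_iff_injective_and_card _).2 ⟨rotationCode_injective hπ, ?_⟩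
  rw [Fintype.card_fin, Fintype.card_perm, Fintype.card_fin, Nat.factorial_succ, hN]

theorem rotationCode_zero (h0 : π 0 = 1) : rotationCode π 0 = 1 := by
  ext x : 1
  simp [rotationCode, blockConcat, h0, Fin.divNat, Fin.modNat]

theorem rotationStep_of_ne_last {r : Fin (N + 1)} (hr : r ≠ Fin.last N) :
    rotationStep π r = extendLast (cyclicStep π r) := by
  simp [rotationStep, blockStep, cyclicStep, hr]

theorem rotationStep_last (h0 : π 0 = 1) (hl : π (Fin.last N) = finRotate n) :
    rotationStep π (Fin.last N) = swap 0 (Fin.last n) := by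
  simp [rotationStep, blockStep, cyclicStep, h0, hl,
    addLeft_one_eq_swap_mul_extendLast_finRotate, mul_assoc]

theorem rotationCode_last (hn : n ≠ 0) (hl : π (Fin.last N) = finRotate n) :
    rotationCode π (Fin.last ((n + 1) * N + n)) = swap ⟨n - 1, by omega⟩ (Fin.last n) := by
  rw [rotationCode, blockConcat, divNat_last, modNat_last, Function.comp_apply, hl,
    addLeft_last_mul_extendLast_finRotate hn]

theorem isSwap_rotationStep (hn : n ≠ 0) (h0 : π 0 = 1) (hl : π (Fin.last N) = finRotate n)
    (hπ : ∀ r ≠ Fin.last N, (cyclicStep π r).IsSwap) (r : Fin (N + 1)) :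
    (rotationStep π r).IsSwap := by
  obtain rfl | hr := eq_or_ne r (Fin.last N)
  · rw [rotationStep_last h0 hl, Perm.swap_isSwap_iff]
    simpa [Fin.ext_iff, eq_comm] using hn
  · obtain ⟨i, j, hij, h⟩ := hπ r hr
    rw [rotationStep_of_ne_last hr, h, extendLast_swap, Perm.swap_isSwap_iff]
    simpa using hij

theorem isSwap_cyclicStep_rotationCode (hπ : ∀ r, (rotationStep π r).IsSwap)
    (s : Fin ((n + 1) * (N + 1))) : (cyclicStep (rotationCode π) s).IsSwap := by
  rw [cyclicStep_rotationCode]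
  exact isSwap_conj (hπ _) _

theorem swapCount_rotationStep_last (h0 : π 0 = 1) (hl : π (Fin.last N) = finRotate n)
    {j : Fin (n + 1)} (hj0 : j ≠ 0) (hj : j ≠ Fin.last n) :
    swapCount (rotationStep π) (Fin.last n) j = 0 := by
  refine card_eq_zero.2 (filter_eq_empty_iff.2 fun r _ h => ?_)
  replace h := congrArg (fun σ => σ (Fin.last n)) h
  obtain rfl | hr := eq_or_ne r (Fin.last N)
  · rw [rotationStep_last h0 hl] at h
    exact hj0 (by simpa using h.symm)
  · rw [rotationStep_of_ne_last hr] at h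
    exact hj (by simpa using h.symm)

theorem swapCount_rotationStep_castSucc (h0 : π 0 = 1) (hl : π (Fin.last N) = finRotate n)
    (i j : Fin n) :
    swapCount (rotationStep π) i.castSucc j.castSucc =
      #{r | r ≠ Fin.last N ∧ cyclicStep π r = swap i j} := by
  refine congrArg card (filter_congr fun r _ => ?_)
  obtain rfl | hr := eq_or_ne r (Fin.last N)
  · have hne : swap 0 (Fin.last n) ≠ swap i.castSucc j.castSucc := by
      rw [← extendLast_swap]
      intro h
      have hn : n = 0 := by simpa [eq_comm] using congrArg (fun σ => σ (Fin.last n)) h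
      exact i.pos.ne' hn
    simp [rotationStep_last h0 hl, hne]
  · simp [rotationStep_of_ne_last hr, hr, ← extendLast_swap, extendLast_injective.eq_iff]

end RotationCode

end PermGrayCode

open PermGrayCode

/-- Let `n ≥ 2` be even. Suppose `S_n` has an almost balanced Gray code from
the identity word `12⋯n` to the word `23⋯n1` (the rotation `finRotate n`): a (non-cyclic)
listing of all `n!` permutations, each exactly once, consecutive ones differing by applying
a transposition, in which every wide transposition (`|i−j| ≠ 1`) on `[n]` is applied
exactly `2·(n−2)!` times. Then `S_{n+1}` has a balanced cyclic Gray code under all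
transpositions from `12⋯n(n+1)` (the identity) to `12⋯(n+1)n` with closing transposition
`(n, n+1)`: each of the `(n+1)n/2` transpositions on `[n+1]` is applied exactly `2·(n−1)!`
times along the cycle, counting the closing step. -/
theorem balanced_cyclic_from_almost_balanced (n : ℕ) (hn : 2 ≤ n) (he : Even n)
    (h : ∃ (N : ℕ) (π : Fin (N + 1) → Equiv.Perm (Fin n)),
      N + 1 = Nat.factorial n ∧
      Function.Bijective π ∧
      π 0 = 1 ∧
      π (Fin.last N) = finRotate n ∧
      (∀ s : Fin (N + 1), (s : ℕ) < N →
        ∃ i j : Fin n, i ≠ j ∧ π (s + 1) = Equiv.swap i j * π s) ∧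
      (∀ i j : Fin n, i ≠ j →
        ¬((i : ℕ) + 1 = (j : ℕ) ∨ (j : ℕ) + 1 = (i : ℕ)) →
        (Finset.univ.filter (fun s : Fin (N + 1) =>
          (s : ℕ) < N ∧ π (s + 1) = Equiv.swap i j * π s)).card
            = 2 * Nat.factorial (n - 2))) :
    ∃ (M : ℕ) (ρ : Fin (M + 1) → Equiv.Perm (Fin (n + 1))),
      M + 1 = Nat.factorial (n + 1) ∧
      Function.Bijective ρ ∧
      ρ 0 = 1 ∧
      ρ (Fin.last M) = Equiv.swap ⟨n - 1, by omega⟩ ⟨n, by omega⟩ ∧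
      ρ 0 = Equiv.swap ⟨n - 1, by omega⟩ ⟨n, by omega⟩ * ρ (Fin.last M) ∧
      (∀ s : Fin (M + 1), ∃ i j : Fin (n + 1), i ≠ j ∧ ρ (s + 1) = Equiv.swap i j * ρ s) ∧
      (∀ i j : Fin (n + 1), i ≠ j →
        (Finset.univ.filter (fun s : Fin (M + 1) =>
          ρ (s + 1) = Equiv.swap i j * ρ s)).card = 2 * Nat.factorial (n - 1)) := by
  obtain ⟨N, π, hN, hπ, h0, hl, hs, hw⟩ := h
  have hn0 : n ≠ 0 := by omega
  have hstep : ∀ r, (rotationStep π r).IsSwap :=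
    isSwap_rotationStep hn0 h0 hl fun r hr => by
      simpa only [Equiv.Perm.IsSwap, cyclicStep_eq_iff] using
        hs r (Fin.lt_last_iff_ne_last.2 hr)
  have hlast := rotationCode_last hn0 hl
  refine ⟨(n + 1) * N + n, rotationCode π, ?_, rotationCode_bijective hπ.injective hN,
    rotationCode_zero h0, hlast, ?_, fun s => ?_, fun i j hij => ?_⟩
  · rw [Nat.factorial_succ, ← hN]
    ring
  · rw [hlast]
    exact (rotationCode_zero h0).trans (Equiv.swap_mul_self _ _).symm
  · obtain ⟨i, j, hij, h⟩ := isSwap_cyclicStep_rotationCode hstep s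
    exact ⟨i, j, hij, cyclicStep_eq_iff.1 h⟩
  · simp only [← cyclicStep_eq_iff]
    refine (swapCount_cyclicStep_rotationCode π i j).trans ?_
    refine differenceCount_eq_two_mul_factorial hn (by simpa using hN) hstep
      (fun j hj0 hj => swapCount_rotationStep_last h0 hl hj0 hj) (fun i j hij hwide => ?_)
      (sub_ne_zero.2 hij.symm)
    rw [swapCount_rotationStep_castSucc h0 hl, ← hw i j hij hwide]
    simp only [cyclicStep_eq_iff, ← Fin.lt_last_iff_ne_last, Fin.lt_def, Fin.val_last]
end
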